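/- arXiv:1711.05222 — 5 statements merged into one kernel-verified Lean document; each statement's English description precedes it below -/
import Mathlib

section
/- Let X be a non-compact locally compact Hausdorff space, 𝔽 ∈ {ℝ, ℂ}, F ⊂ C(X,𝔽) a 2-independent linear subspace, and υ : X → 𝔽 ∖ {0} a continuous function. Let F' be the algebraic dual of F equipped with the topology of pointwise convergence, and define κ : X → F' by κ(x)(f) = υ(x)·f(x). Then the following are equivalent: (a) the extension of κ to the one-point compactification X̂ of X that sends the point at infinity to 0 ∈ F' is a topological embedding of X̂ into F' (so in particular κ is a topological embedding and κ(X) ∪ {0} is homeomorphic to X̂); (b) the function υ·f belongs to C₀(X,𝔽) for every f ∈ F. -/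
open Filter Topology

/-- Let `X` be a non-compact locally compact Hausdorff space,
`𝕜 ∈ {ℝ, ℂ}`, `F ⊆ C(X,𝕜)` a 2-independent linear subspace, and `υ : X → 𝕜 \ {0}`
continuous. Let the algebraic dual of `F` carry the topology of pointwise convergence
(i.e. the subspace topology it inherits from the product topology on `F → 𝕜`), and define
`κ : X → (F → 𝕜)` by `κ(x)(f) = υ(x)·f(x)`. Then the extension of `κ` to the one-point
compactification of `X` sending `∞` to `0` is a topological embedding if and only if
`υ·f ∈ C₀(X,𝕜)` for every `f ∈ F`. -/
theorem stmt9 {𝕜 X : Type*} [RCLike 𝕜]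
    [TopologicalSpace X] [LocallyCompactSpace X] [T2Space X] [NoncompactSpace X]
    (F : Submodule 𝕜 C(X, 𝕜))
    (hF : ∀ x y : X, x ≠ y → ∃ f ∈ F, ∃ g ∈ F,
      f x = 1 ∧ f y = 0 ∧ g x = 0 ∧ g y = 1)
    (υ : X → 𝕜) (hυc : Continuous υ) (hυ0 : ∀ x, υ x ≠ 0) :
    Topology.IsEmbedding
        (fun p : OnePoint X =>
          p.elim (0 : F → 𝕜) (fun x => fun f : F => υ x * (f : C(X, 𝕜)) x)) ↔
      ∀ f ∈ F, Tendsto (fun x => υ x * f x) (cocompact X) (𝓝 0) := by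
  set K : OnePoint X → (F → 𝕜) := fun p : OnePoint X =>
          p.elim (0 : F → 𝕜) (fun x => fun f : F => υ x * (f : C(X, 𝕜)) x) with hK
  have hKi : K OnePoint.infty = 0 := rfl
  have hKx : ∀ (x : X) (f : F), K (x : OnePoint X) f = υ x * (f : C(X, 𝕜)) x :=
    fun x f => rfl
  constructor
  · intro h f hf
    have h1 := (OnePoint.continuous_iff _).1 h.continuous
    have h2 := h1.1
    rw [coclosedCompact_eq_cocompact, tendsto_pi_nhds] at h2
    exact h2 ⟨f, hf⟩
  · intro h
    have hnz : ∀ x : X, ∃ f : F, (f : C(X, 𝕜)) x ≠ 0 := by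
      intro x
      have hy : ∃ y : X, x ≠ y := by
        by_contra! hc
        have : Subsingleton X := ⟨fun a b => (hc a).symm.trans (hc b)⟩
        exact not_compactSpace_iff.2 (inferInstance : NoncompactSpace X) inferInstance
      obtain ⟨y, hxy⟩ := hy
      obtain ⟨f, hf, g, hg, h1, -⟩ := hF x y hxy
      exact ⟨⟨f, hf⟩, by simp [h1]⟩
    have hc : Continuous K := by
      rw [OnePoint.continuous_iff]
      constructor
      · rw [coclosedCompact_eq_cocompact, tendsto_pi_nhds]
        intro f
        exact h f f.2
      · refine continuous_pi fun f => ?_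
        exact hυc.mul (f : C(X, 𝕜)).continuous
    have hi : Function.Injective K := by
      intro p q hpq
      induction p using OnePoint.rec with
      | infty =>
        induction q using OnePoint.rec with
        | infty => rfl
        | coe y =>
          obtain ⟨f, hf⟩ := hnz y
          have := congrFun hpq f
          rw [hKx, hKi] at this
          exact absurd this.symm (mul_ne_zero (hυ0 y) hf)
      | coe x =>
        induction q using OnePoint.rec with
        | infty =>
          obtain ⟨f, hf⟩ := hnz x
          have := congrFun hpq f
          rw [hKx, hKi] at this
          exact absurd this (mul_ne_zero (hυ0 x) hf)
        | coe y =>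
          by_contra hne
          have hxy : x ≠ y := fun e => hne (by rw [e])
          obtain ⟨f, hf, g, hg, h1, h2, -⟩ := hF x y hxy
          have := congrFun hpq ⟨f, hf⟩
          rw [hKx, hKx] at this
          simp [h1, h2, hυ0] at this
    exact (hc.isClosedEmbedding hi).isEmbedding
end

section
/- Let F and E be 2-independent normed spaces of continuous functions (NSCFs) over locally compact Hausdorff spaces X and Y respectively (scalars 𝔽 ∈ {ℝ, ℂ}), such that ‖y_E‖ → +∞ along the cocompact filter on Y. Let Φ : Y → X be continuous and ω : Y → 𝔽 be bounded, and suppose that W_{Φ,ω} (sending f to y ↦ ω(y)·f(Φ(y))) is a linear homeomorphism of F onto E (a bijective bounded linear operator with bounded inverse). Then Φ(Y) is closed in X and Φ is a topological embedding. -/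
open Filter Topology

/-- Let `F` and `E` be 2-independent normed spaces of continuous
functions over locally compact Hausdorff spaces `X` and `Y` respectively (realized via
injective continuous linear inclusions `JF : F →ₗ C(X,𝕜)` and `JE : E →ₗ C(Y,𝕜)`, with
bounded point evaluations `evE y : E →L[𝕜] 𝕜`), such that `‖evE y‖ → +∞` along the
cocompact filter on `Y`. Let `Φ : Y → X` be continuous and `ω : Y → 𝕜` bounded, and
suppose `W : F ≃L[𝕜] E` is a linear homeomorphism acting by `(W f)(y) = ω(y)·f(Φ(y))`.
Then `Φ(Y)` is closed in `X` and `Φ` is a topological embedding. -/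
theorem stmt15 {𝕜 X Y F E : Type*} [RCLike 𝕜]
    [TopologicalSpace X] [LocallyCompactSpace X] [T2Space X]
    [TopologicalSpace Y] [LocallyCompactSpace Y] [T2Space Y]
    [NormedAddCommGroup F] [NormedSpace 𝕜 F]
    [NormedAddCommGroup E] [NormedSpace 𝕜 E]
    (JF : F →ₗ[𝕜] C(X, 𝕜)) (hJFinj : Function.Injective JF) (hJFcont : Continuous JF)
    (JE : E →ₗ[𝕜] C(Y, 𝕜)) (hJEinj : Function.Injective JE) (hJEcont : Continuous JE)
    (hFind : ∀ x x' : X, x ≠ x' → ∃ f g : F,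
      JF f x = 1 ∧ JF f x' = 0 ∧ JF g x = 0 ∧ JF g x' = 1)
    (hEind : ∀ y y' : Y, y ≠ y' → ∃ f g : E,
      JE f y = 1 ∧ JE f y' = 0 ∧ JE g y = 0 ∧ JE g y' = 1)
    (evE : Y → E →L[𝕜] 𝕜) (hevE : ∀ (y : Y) (g : E), evE y g = JE g y)
    (hevinf : Tendsto (fun y => ‖evE y‖) (cocompact Y) atTop)
    (Φ : Y → X) (hΦ : Continuous Φ)
    (ω : Y → 𝕜) (hω : ∃ M : ℝ, ∀ y, ‖ω y‖ ≤ M)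
    (W : F ≃L[𝕜] E)
    (hW : ∀ (f : F) (y : Y), JE (W f) y = ω y * JF f (Φ y)) :
    IsClosed (Set.range Φ) ∧ Topology.IsEmbedding Φ := by
  obtain ⟨M, hM⟩ := hω
  have hinj : Function.Injective Φ := by
    intro y y' h
    by_contra hne
    obtain ⟨f, g, h1, h2, h3, h4⟩ := hEind y y' hne
    have e1 := hW (W.symm f) y
    have e2 := hW (W.symm f) y'
    have e4 := hW (W.symm g) y'
    rw [ContinuousLinearEquiv.apply_symm_apply] at e1 e2 e4
    rw [h1] at e1
    rw [h2, ← h] at e2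
    rw [h4] at e4
    rcases mul_eq_zero.1 e2.symm with h0 | h0
    · rw [h0, zero_mul] at e4
      exact one_ne_zero e4
    · rw [h0, mul_zero] at e1
      exact one_ne_zero e1
  have hproper : IsProperMap Φ := by
    rw [isProperMap_iff_isCompact_preimage]
    refine ⟨hΦ, fun K hK => ?_⟩
    haveI : CompactSpace K := isCompact_iff_compactSpace.1 hK
    let R : F →L[𝕜] C(K, 𝕜) :=
      { toFun := fun f => (JF f).restrict K
        map_add' := fun f g => by ext x; simp
        map_smul' := fun c f => by ext x; simp
        cont := (ContinuousMap.continuous_restrict K).comp hJFcont }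
    let T : E →L[𝕜] C(K, 𝕜) := R.comp (W.symm : E →L[𝕜] F)
    have hbd : ∀ y ∈ Φ ⁻¹' K, ‖evE y‖ ≤ M * ‖T‖ := by
      intro y hy
      have hM0 : 0 ≤ M := (norm_nonneg _).trans (hM y)
      refine ContinuousLinearMap.opNorm_le_bound _ (by positivity) fun g => ?_
      have e := hW (W.symm g) y
      rw [ContinuousLinearEquiv.apply_symm_apply] at e
      rw [hevE, e, norm_mul, mul_assoc]
      have h1 : ‖JF (W.symm g) (Φ y)‖ ≤ ‖T g‖ := (T g).norm_coe_le_norm ⟨Φ y, hy⟩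
      exact mul_le_mul (hM y) (h1.trans (T.le_opNorm g)) (norm_nonneg _) hM0
    have hev := hevinf.eventually (eventually_gt_atTop (M * ‖T‖))
    obtain ⟨C, hC, hCs⟩ := mem_cocompact.1 hev
    refine hC.of_isClosed_subset (hK.isClosed.preimage hΦ) fun y hy => ?_
    by_contra hyC
    exact absurd (hbd y hy) (not_le.2 (hCs hyC))
  exact ⟨hproper.isClosedMap.isClosed_range,
    (IsClosedEmbedding.of_continuous_injective_isClosedMap hΦ hinj
      hproper.isClosedMap).isEmbedding⟩
end

section
/- Let F be a normed space of continuous functions (NSCF) over a locally compact Hausdorff space X (scalars 𝔽 ∈ {ℝ, ℂ}) such that every point evaluation x_F is a nonzero functional, ‖x_F‖ → +∞ along the cocompact filter on X, and the set of bounded functions belonging to F is dense in F. Then for every f ∈ F, the quotient f(x)/‖x_F‖ tends to 0 along the cocompact filter on X (i.e., for every ε > 0 there is a compact K ⊂ X such that |f(x)|/‖x_F‖ ≤ ε for all x ∉ K). -/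
open Filter Topology

/-- Let `F` be a normed space of continuous functions over a locally
compact Hausdorff space `X` (realized via an injective continuous linear inclusion
`JF : F →ₗ C(X,𝕜)`, with bounded point evaluations `evF x : F →L[𝕜] 𝕜`) such that every
point evaluation is nonzero, `‖evF x‖ → +∞` along the cocompact filter on `X`, and the
bounded functions belonging to `F` form a dense subset of `F`. Then for every `f ∈ F`
the quotient `‖f(x)‖ / ‖evF x‖` tends to `0` along the cocompact filter on `X`. -/
theorem stmt17 {𝕜 X F : Type*} [RCLike 𝕜]
    [TopologicalSpace X] [LocallyCompactSpace X] [T2Space X]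
    [NormedAddCommGroup F] [NormedSpace 𝕜 F]
    (JF : F →ₗ[𝕜] C(X, 𝕜)) (hJFinj : Function.Injective JF) (hJFcont : Continuous JF)
    (evF : X → F →L[𝕜] 𝕜) (hevF : ∀ (x : X) (f : F), evF x f = JF f x)
    (hev0 : ∀ x : X, evF x ≠ 0)
    (hevinf : Tendsto (fun x => ‖evF x‖) (cocompact X) atTop)
    (hdense : Dense {f : F | ∃ M : ℝ, ∀ x : X, ‖JF f x‖ ≤ M}) :
    ∀ f : F, Tendsto (fun x => ‖JF f x‖ / ‖evF x‖) (cocompact X) (𝓝 0) := by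
  intro f
  rw [Metric.tendsto_nhds]
  intro ε hε
  obtain ⟨g, ⟨M, hM⟩, hg⟩ := Metric.dense_iff.1 hdense f (ε / 2) (half_pos hε) |>.imp
    fun g hg => And.intro hg.2 hg.1
  have hfg : ‖f - g‖ < ε / 2 := by
    rw [← dist_eq_norm, dist_comm]
    exact hg
  filter_upwards [hevinf.eventually_gt_atTop (2 * M / ε)] with x hx
  have hpos : 0 < ‖evF x‖ := norm_pos_iff.2 (hev0 x)
  rw [Real.dist_eq, sub_zero, abs_of_nonneg (by positivity), div_lt_iff₀ hpos]
  rw [div_lt_iff₀ hε] at hx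
  have h1 : ‖JF f x‖ ≤ ‖evF x (f - g)‖ + ‖JF g x‖ := by
    have h : JF f x = evF x (f - g) + JF g x := by
      rw [map_sub, hevF, hevF]
      ring
    rw [h]
    exact norm_add_le _ _
  have h2 := (evF x).le_opNorm (f - g)
  have h3 := mul_lt_mul_of_pos_left hfg hpos
  have h4 := hM x
  linarith
end

section
/- Let Z ⊂ ℂ^n be a nonempty open connected set and let F be a collection of holomorphic functions on Z that separates the points of Z (for any distinct z, w ∈ Z there is f ∈ F with f(z) ≠ f(w)). Then there exist f₁, …, f_n ∈ F such that the holomorphic function z ↦ det[∂f_i/∂z_j(z)]_{i,j=1}^n (the determinant of the matrix of first-order complex partial derivatives) is not identically zero on Z. -/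
open Filter Topology Metric

/-- A holomorphic function on an open subset of `ℂ^n` is of class `C^1`. -/
lemma hol_contDiffAt {n : ℕ} {Z : Set (Fin n → ℂ)} (hZ : IsOpen Z) {f : (Fin n → ℂ) → ℂ}
    (hf : DifferentiableOn ℂ f Z) {z : Fin n → ℂ} (hz : z ∈ Z) : ContDiffAt ℂ 1 f z := by
  rw [contDiffAt_one_iff]
  refine ⟨fderiv ℂ f, Z, hZ.mem_nhds hz, ?_, fun x hx =>
    (hf.differentiableAt (hZ.mem_nhds hx)).hasFDerivAt⟩
  clear hz z
  intro z hz
  apply ContinuousAt.continuousWithinAt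
  obtain ⟨R, hR, hRZ⟩ := Metric.nhds_basis_closedBall.mem_iff.1 (hZ.mem_nhds hz)
  have huc := (isCompact_closedBall z R).uniformContinuousOn_of_continuous
    (hf.continuousOn.mono hRZ)
  rw [continuousAt_clm_apply]
  intro v
  -- choose a radius so that `w + t v` stays in the closed ball
  obtain ⟨ρ, hρ, hρv⟩ : ∃ ρ : ℝ, 0 < ρ ∧ ρ * ‖v‖ ≤ R / 2 := by
    refine ⟨R / 2 / (‖v‖ + 1), by positivity, ?_⟩
    rw [div_mul_eq_mul_div, div_le_iff₀ (by positivity)]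
    nlinarith [norm_nonneg v]
  have hmem : ∀ w ∈ closedBall z (R / 2), ∀ t : ℂ, ‖t‖ ≤ ρ → w + t • v ∈ closedBall z R := by
    intro w hw t ht
    rw [mem_closedBall, dist_eq_norm] at *
    calc ‖w + t • v - z‖ = ‖(w - z) + t • v‖ := by congr 1; abel
      _ ≤ ‖w - z‖ + ‖t‖ * ‖v‖ := by rw [← norm_smul]; exact norm_add_le _ _
      _ ≤ R / 2 + ρ * ‖v‖ := by gcongr
      _ ≤ R := by linarith
  have hder : ∀ w ∈ closedBall z (R / 2), ∀ t : ℂ, ‖t‖ ≤ ρ →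
      HasDerivAt (fun t : ℂ => f (w + t • v)) (fderiv ℂ f (w + t • v) v) t := by
    intro w hw t ht
    have h1 : HasFDerivAt f (fderiv ℂ f (w + t • v)) (w + t • v) :=
      (hf.differentiableAt (hZ.mem_nhds (hRZ (hmem w hw t ht)))).hasFDerivAt
    have h2 : HasDerivAt (fun t : ℂ => w + t • v) v t := by
      simpa using ((hasDerivAt_id t).smul_const v).const_add w
    exact h1.comp_hasDerivAt t h2
  rw [Metric.continuousAt_iff]
  intro ε hε
  obtain ⟨δ, hδ, H⟩ := Metric.uniformContinuousOn_iff.1 huc (ε / 2 * ρ) (by positivity)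
  refine ⟨min δ (R / 2), by positivity, fun w hw => ?_⟩
  have hw1 : dist w z < δ := hw.trans_le (min_le_left _ _)
  have hw2 : w ∈ closedBall z (R / 2) := (hw.trans_le (min_le_right _ _)).le
  have hz2 : z ∈ closedBall z (R / 2) := mem_closedBall_self (by positivity)
  have hd : ∀ t : ℂ, ‖t‖ ≤ ρ → HasDerivAt (fun t : ℂ => f (w + t • v) - f (z + t • v))
      (fderiv ℂ f (w + t • v) v - fderiv ℂ f (z + t • v) v) t :=
    fun t ht => (hder w hw2 t ht).sub (hder z hz2 t ht)
  have key := Complex.norm_deriv_le_of_forall_mem_sphere_norm_le (c := 0) (R := ρ)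
    (C := ε / 2 * ρ) (f := fun t : ℂ => f (w + t • v) - f (z + t • v)) hρ
    (by
      apply DifferentiableOn.diffContOnCl
      intro t ht
      have : ‖t‖ ≤ ρ := by simpa using closure_ball_subset_closedBall ht
      exact (hd t this).differentiableAt.differentiableWithinAt)
    (by
      intro t ht
      have : ‖t‖ ≤ ρ := by
        have := mem_sphere_iff_norm.1 ht
        simpa using this.le
      rw [← dist_eq_norm]
      refine (H _ (hmem w hw2 t this) _ (hmem z hz2 t this) ?_).le
      simpa using hw1)
  rw [(hd 0 (by simpa using hρ.le)).deriv] at key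
  simp only [zero_smul, add_zero] at key
  rw [dist_eq_norm]
  rw [mul_div_assoc, div_self hρ.ne', mul_one] at key
  linarith

/-- Linearly independent functionals are jointly surjective. -/
lemma pi_range_top {n r : ℕ} (L : Fin r → ((Fin n → ℂ) →L[ℂ] ℂ)) (hL : LinearIndependent ℂ L) :
    (ContinuousLinearMap.pi L).range = ⊤ := by
  by_contra hne
  obtain ⟨φ, hφ, hle⟩ := Submodule.exists_le_ker_of_lt_top _ (lt_top_iff_ne_top.2 hne)
  apply hφ
  have hsum : ∀ x, φ x = ∑ i, x i * φ (Pi.single i 1) := by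
    intro x
    conv_lhs => rw [pi_eq_sum_univ' x]
    simp only [map_sum, map_smul, smul_eq_mul]
  have h0 : ∀ i, φ (Pi.single i 1) = 0 := by
    apply Fintype.linearIndependent_iff.1 hL
    ext1 x
    have : φ (ContinuousLinearMap.pi L x) = 0 := hle ⟨x, rfl⟩
    rw [hsum] at this
    simpa [mul_comm] using this
  ext i
  simpa using h0 i

lemma step {n r : ℕ} (hr : r < n) (Z : Set (Fin n → ℂ)) (hZo : IsOpen Z)
    (F : Set ((Fin n → ℂ) → ℂ))
    (hFhol : ∀ f ∈ F, DifferentiableOn ℂ f Z)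
    (hFsep : ∀ z ∈ Z, ∀ w ∈ Z, z ≠ w → ∃ f ∈ F, f z ≠ f w)
    (f : Fin r → ((Fin n → ℂ) → ℂ)) (hfF : ∀ i, f i ∈ F) (a : Fin n → ℂ) (ha : a ∈ Z)
    (hind : LinearIndependent ℂ (fun i => fderiv ℂ (f i) a)) :
    ∃ f : Fin (r + 1) → ((Fin n → ℂ) → ℂ), (∀ i, f i ∈ F) ∧
      ∃ z ∈ Z, LinearIndependent ℂ (fun i => fderiv ℂ (f i) z) := by
  by_contra hcon
  have hC1 : ∀ i, ∀ z ∈ Z, ContDiffAt ℂ 1 (f i) z := fun i z hz =>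
    hol_contDiffAt hZo (hFhol _ (hfF i)) hz
  -- near `a` the differentials of all members of `F` are in the span
  have hspan : ∀ᶠ z in 𝓝 a, z ∈ Z ∧ ∀ g ∈ F,
      fderiv ℂ g z ∈ Submodule.span ℂ (Set.range fun i => fderiv ℂ (f i) z) := by
    have hcont : ContinuousAt (fun z => fun i => fderiv ℂ (f i) z) a :=
      continuousAt_pi.2 fun i => (hC1 i a ha).continuousAt_fderiv (by norm_num)
    filter_upwards [hcont.eventually hind.eventually, hZo.mem_nhds ha] with z hz hzZ
    refine ⟨hzZ, fun g hg => ?_⟩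
    by_contra hg'
    apply hcon
    refine ⟨Fin.cons g f, fun i => ?_, z, hzZ, ?_⟩
    · refine Fin.cases ?_ (fun j => ?_) i
      · simpa using hg
      · simpa using hfF j
    · have := linearIndependent_finCons.2 ⟨hz, hg'⟩
      have heq : (fun i => fderiv ℂ ((Fin.cons g f : Fin (r + 1) → ((Fin n → ℂ) → ℂ)) i) z) =
          Fin.cons (fderiv ℂ g z) (fun i => fderiv ℂ (f i) z) := by
        ext1 i
        refine Fin.cases ?_ (fun j => ?_) i <;> simp
      rw [heq]
      exact this
  set A : (Fin n → ℂ) →L[ℂ] (Fin r → ℂ) := ContinuousLinearMap.pi fun i => fderiv ℂ (f i) a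
    with hA
  have hAtop : A.range = ⊤ := pi_range_top _ hind
  obtain ⟨p, hp⟩ : A.ker.ClosedComplemented := Submodule.ClosedComplemented.of_finiteDimensional _
  let e : (Fin n → ℂ) ≃L[ℂ] (Fin r → ℂ) × A.ker :=
    ContinuousLinearMap.equivProdOfSurjectiveOfIsCompl A p hAtop
      (LinearMap.range_eq_of_proj hp) (LinearMap.isCompl_of_proj hp)
  let Φ : (Fin n → ℂ) → (Fin r → ℂ) × A.ker := fun z => (fun i => f i z, p z)
  have hΦ : ContDiffAt ℂ 1 Φ a :=
    (contDiffAt_pi.2 fun i => hC1 i a ha).prodMk p.contDiff.contDiffAt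
  have hΦ' : HasFDerivAt Φ (e : (Fin n → ℂ) →L[ℂ] (Fin r → ℂ) × A.ker) a := by
    have h1 : HasFDerivAt (fun z => fun i => f i z) A a :=
      hasFDerivAt_pi.2 fun i => ((hC1 i a ha).differentiableAt (by norm_num)).hasFDerivAt
    exact h1.prodMk p.hasFDerivAt
  have hstr := hΦ.hasStrictFDerivAt' hΦ' (by norm_num)
  let Ψ := hΦ.localInverse hΦ' (by norm_num)
  have hΨ : ContDiffAt ℂ 1 Ψ (Φ a) := hΦ.to_localInverse hΦ' (by norm_num)
  have hΨa : Ψ (Φ a) = a := hΦ.localInverse_apply_image hΦ' (by norm_num)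
  have hR : ∀ᶠ w in 𝓝 (Φ a), Φ (Ψ w) = w := hstr.eventually_right_inverse
  have hT : Tendsto Ψ (𝓝 (Φ a)) (𝓝 a) := by
    have := hΨ.continuousAt.tendsto
    rwa [hΨa] at this
  have hD : ∀ᶠ w in 𝓝 (Φ a), DifferentiableAt ℂ Ψ w :=
    (hΨ.eventually (by simp)).mono fun w hw => hw.differentiableAt (by norm_num)
  have hall := (hD.and (hT.eventually hspan)).and hR.eventually_nhds
  obtain ⟨ε, hε, hball⟩ := Metric.eventually_nhds_iff_ball.1 hall
  -- the slice
  set c : Fin r → ℂ := (Φ a).1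
  set d : A.ker := (Φ a).2
  have hin : ∀ y ∈ ball d ε, (c, y) ∈ ball (Φ a) ε := by
    intro y hy
    rw [mem_ball, Prod.dist_eq]
    simpa [c, d, hε] using hy
  have hconst : ∀ g ∈ F, ∀ y ∈ ball d ε, g (Ψ (c, y)) = g (Ψ (c, d)) := by
    intro g hg y hy
    have hmain : ∀ y ∈ ball d ε, HasFDerivAt (fun y => g (Ψ (c, y))) (0 : A.ker →L[ℂ] ℂ) y := by
      intro y hy
      obtain ⟨⟨hd, hz, hsp⟩, hr⟩ := hball _ (hin y hy)
      have hdg : ∀ g ∈ F, HasFDerivAt g (fderiv ℂ g (Ψ (c, y))) (Ψ (c, y)) := fun g hg =>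
        ((hFhol g hg).differentiableAt (hZo.mem_nhds hz)).hasFDerivAt
      have hcomp : ∀ g ∈ F, HasFDerivAt (fun w => g (Ψ w))
          ((fderiv ℂ g (Ψ (c, y))).comp (fderiv ℂ Ψ (c, y))) (c, y) := fun g hg =>
        (hdg g hg).comp (c, y) hd.hasFDerivAt
      have hkill : ∀ i, ∀ v : A.ker, fderiv ℂ (f i) (Ψ (c, y)) (fderiv ℂ Ψ (c, y) (0, v)) = 0 := by
        intro i v
        have h1 := hcomp (f i) (hfF i)
        have h2 : HasFDerivAt (fun w : (Fin r → ℂ) × A.ker => w.1 i)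
            ((ContinuousLinearMap.proj (R := ℂ) (φ := fun _ : Fin r => ℂ) i).comp
              (ContinuousLinearMap.fst ℂ (Fin r → ℂ) A.ker)) (c, y) :=
          ((ContinuousLinearMap.proj (R := ℂ) (φ := fun _ : Fin r => ℂ) i).comp
              (ContinuousLinearMap.fst ℂ (Fin r → ℂ) A.ker)).hasFDerivAt
        have h3 : (fun w => f i (Ψ w)) =ᶠ[𝓝 (c, y)] fun w => w.1 i := by
          filter_upwards [hr] with w hw
          exact congrFun (congrArg Prod.fst hw) i
        have h4 := h1.unique (h2.congr_of_eventuallyEq h3)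
        simpa using DFunLike.congr_fun h4 (0, v)
      have hkg : ∀ v : A.ker, fderiv ℂ g (Ψ (c, y)) (fderiv ℂ Ψ (c, y) (0, v)) = 0 := by
        intro v
        refine Submodule.span_induction (p := fun L _ => L (fderiv ℂ Ψ (c, y) (0, v)) = 0)
          ?_ ?_ ?_ ?_ (hsp g hg)
        · rintro _ ⟨i, rfl⟩
          exact hkill i v
        · simp
        · intro x y _ _ hx hy
          simp [hx, hy]
        · intro t x _ hx
          simp [hx]
      have hpair : HasFDerivAt (fun y : A.ker => (c, y))
          (ContinuousLinearMap.inr ℂ (Fin r → ℂ) A.ker) y := hasFDerivAt_prodMk_right c y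
      have := (hcomp g hg).comp y hpair
      have h0 : ((fderiv ℂ g (Ψ (c, y))).comp (fderiv ℂ Ψ (c, y))).comp
          (ContinuousLinearMap.inr ℂ (Fin r → ℂ) A.ker) = 0 := by
        ext1 v
        exact hkg v
      rw [h0] at this
      exact this
    refine isOpen_ball.is_const_of_fderiv_eq_zero (𝕜 := ℂ) (f := fun y => g (Ψ (c, y)))
      (convex_ball d ε).isPreconnected
      (fun y hy => (hmain y hy).differentiableAt.differentiableWithinAt)
      (fun y hy => (hmain y hy).fderiv) hy (mem_ball_self hε)
  -- a second point on the slice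
  have hker : Nontrivial A.ker := by
    rw [← Module.finrank_pos_iff (R := ℂ)]
    have := LinearMap.finrank_range_add_finrank_ker (A : (Fin n → ℂ) →ₗ[ℂ] (Fin r → ℂ))
    have h2 : Module.finrank ℂ (LinearMap.range (A : (Fin n → ℂ) →ₗ[ℂ] (Fin r → ℂ))) ≤ r := by
      simpa using Submodule.finrank_le (LinearMap.range (A : (Fin n → ℂ) →ₗ[ℂ] (Fin r → ℂ)))
    simp only [Module.finrank_fin_fun] at this
    omega
  obtain ⟨v, hv⟩ := exists_ne (0 : A.ker)
  obtain ⟨y, hy, hyd⟩ : ∃ y ∈ ball d ε, y ≠ d := by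
    have hv' : 0 < ‖v‖ := norm_pos_iff.2 hv
    refine ⟨d + ((ε / 2 / ‖v‖ : ℝ) : ℂ) • v, ?_, ?_⟩
    · rw [mem_ball, dist_eq_norm, add_sub_cancel_left, norm_smul, Complex.norm_real,
        Real.norm_of_nonneg (by positivity), div_mul_cancel₀ _ hv'.ne']
      linarith
    · intro h
      have := add_eq_left.1 h
      rcases smul_eq_zero.1 this with h | h
      · have h' : ε / 2 / ‖v‖ = 0 := by exact_mod_cast h
        have : 0 < ε / 2 / ‖v‖ := by positivity
        linarith
      · exact hv h
  have H1 := hball _ (hin y hy)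
  have H2 := hball _ (hin d (mem_ball_self hε))
  have hne : Ψ (c, y) ≠ Ψ (c, d) := by
    intro h
    have := congrArg Φ h
    rw [H1.2.self_of_nhds, H2.2.self_of_nhds] at this
    exact hyd (congrArg Prod.snd this)
  obtain ⟨g, hg, hgne⟩ := hFsep _ H1.1.2.1 _ H2.1.2.1 hne
  exact hgne (hconst g hg y hy)

/-- Let `Z ⊆ ℂ^n` be a nonempty open connected set and let `F` be a
collection of holomorphic functions on `Z` separating the points of `Z`. Then there are
`f₁, …, f_n ∈ F` such that the holomorphic function
`z ↦ det [∂f_i/∂z_j (z)]_{i,j=1}^n` is not identically zero on `Z`. -/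
theorem stmt18 {n : ℕ} (Z : Set (Fin n → ℂ)) (hZo : IsOpen Z) (hZc : IsConnected Z)
    (F : Set ((Fin n → ℂ) → ℂ))
    (hFhol : ∀ f ∈ F, DifferentiableOn ℂ f Z)
    (hFsep : ∀ z ∈ Z, ∀ w ∈ Z, z ≠ w → ∃ f ∈ F, f z ≠ f w) :
    ∃ f : Fin n → ((Fin n → ℂ) → ℂ), (∀ i, f i ∈ F) ∧
      ∃ z ∈ Z, Matrix.det (Matrix.of fun i j : Fin n =>
        fderiv ℂ (f i) z (Pi.single j 1)) ≠ 0 := by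

  have key : ∀ r ≤ n, ∃ f : Fin r → ((Fin n → ℂ) → ℂ), (∀ i, f i ∈ F) ∧
      ∃ z ∈ Z, LinearIndependent ℂ (fun i => fderiv ℂ (f i) z) := by
    intro r
    induction r with
    | zero =>
      intro _
      obtain ⟨z, hz⟩ := hZc.nonempty
      exact ⟨fun i => i.elim0, fun i => i.elim0, z, hz, linearIndependent_empty_type⟩
    | succ r ih =>
      intro hr
      obtain ⟨f, hf, z, hz, hi⟩ := ih (by omega)
      exact step (by omega) Z hZo F hFhol hFsep f hf z hz hi
  obtain ⟨f, hf, z, hz, hi⟩ := key n le_rfl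
  refine ⟨f, hf, z, hz, ?_⟩
  rw [← isUnit_iff_ne_zero, ← Matrix.isUnit_iff_isUnit_det,
    ← Matrix.linearIndependent_rows_iff_isUnit, Fintype.linearIndependent_iff]
  intro g hg
  apply Fintype.linearIndependent_iff.1 hi
  apply ContinuousLinearMap.coe_injective
  apply LinearMap.pi_ext'
  intro j
  ext
  have := congrFun hg j
  simpa [Matrix.row] using this
end

section
/- Let X ⊂ ℂ^d and Y ⊂ ℂ^m be nonempty open connected sets, and let F be a collection of holomorphic functions on X that separates the points of X. If Φ : Y → X is a continuous map such that f ∘ Φ is holomorphic on Y for every f ∈ F, then Φ is holomorphic on Y (as a map into ℂ^d). -/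
section Helpers

open Set Filter Topology Metric


/-- second-order Taylor bound in one variable -/
theorem aux_one_var {g : ℂ → ℂ} {R M : ℝ} (hR : 0 < R) (hg : DifferentiableOn ℂ g (ball 0 R))
    (hM : ∀ t ∈ ball (0:ℂ) R, ‖g t‖ ≤ M) {t : ℂ} (ht : t ∈ ball (0:ℂ) R) :
    ‖g t - g 0 - t * deriv g 0‖ ≤ (4 * M / R / R) * ‖t‖ ^ 2 := by
  have h0 : (0:ℂ) ∈ ball (0:ℂ) R := mem_ball_self hR
  have hn : ball (0:ℂ) R ∈ 𝓝 (0:ℂ) := ball_mem_nhds _ hR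
  have h1 : ∀ z ∈ ball (0:ℂ) R, ‖dslope g 0 z‖ ≤ 2 * M / R := by
    intro z hz
    apply Complex.norm_dslope_le_div_of_mapsTo_ball hg _ hz
    intro w hw
    rw [mem_closedBall, dist_eq_norm]
    calc ‖g w - g 0‖ ≤ ‖g w‖ + ‖g 0‖ := norm_sub_le _ _
      _ ≤ 2 * M := by linarith [hM w hw, hM 0 h0]
  have hd : DifferentiableOn ℂ (dslope g 0) (ball 0 R) :=
    (Complex.differentiableOn_dslope hn).2 hg
  have h2 : ‖dslope (dslope g 0) 0 t‖ ≤ (4 * M / R) / R := by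
    apply Complex.norm_dslope_le_div_of_mapsTo_ball hd _ ht
    intro w hw
    rw [mem_closedBall, dist_eq_norm]
    calc _ ≤ ‖dslope g 0 w‖ + ‖dslope g 0 0‖ := norm_sub_le _ _
      _ ≤ 2 * M / R + 2 * M / R := add_le_add (h1 w hw) (h1 0 h0)
      _ = 4 * M / R := by ring
  have e1 := sub_smul_dslope g 0 t
  have e2 := sub_smul_dslope (dslope g 0) 0 t
  simp only [sub_zero, smul_eq_mul, dslope_same] at e1 e2
  have e3 : g t - g 0 - t * deriv g 0 = t ^ 2 * dslope (dslope g 0) 0 t := by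
    rw [← e1]; linear_combination (-t) * e2
  rw [e3, norm_mul, norm_pow, mul_comm]
  gcongr

section Osgood
variable {E : Type*} [NormedAddCommGroup E] [NormedSpace ℂ E]

/-- directional complex derivative -/
noncomputable def dirD (f : E → ℂ) (z v : E) : ℂ := deriv (fun t : ℂ => f (z + t • v)) 0

def GH (f : E → ℂ) (U : Set E) : Prop :=
  ∀ z ∈ U, ∀ v, DifferentiableAt ℂ (fun t : ℂ => f (z + t • v)) 0

theorem GH.line {f : E → ℂ} {U : Set E} (hf : GH f U) (z v : E) :
    DifferentiableOn ℂ (fun t : ℂ => f (z + t • v)) {t | z + t • v ∈ U} := by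
  intro t ht
  apply DifferentiableAt.differentiableWithinAt
  have h1 := hf _ ht v
  have h2 : (fun s : ℂ => f (z + s • v)) =
      (fun s : ℂ => f ((z + t • v) + s • v)) ∘ (fun s => s - t) := by
    funext s
    simp only [Function.comp]
    congr 1
    rw [sub_smul]; abel
  rw [h2]
  apply DifferentiableAt.comp
  · simpa using h1
  · fun_prop

theorem GH.quad {f : E → ℂ} {U : Set E} (hU : IsOpen U) (hc : ContinuousOn f U) (hf : GH f U)
    {z0 : E} (hz0 : z0 ∈ U) : ∃ δ > 0, ∃ C ≥ 0, ball z0 (2 * δ) ⊆ U ∧ ∀ z ∈ ball z0 δ, ∀ v : E,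
      ‖v‖ < δ → ‖f (z + v) - f z - dirD f z v‖ ≤ C * ‖v‖ ^ 2 := by
  have hca : ContinuousAt f z0 := hc.continuousAt (hU.mem_nhds hz0)
  have hb : ∀ᶠ z in 𝓝 z0, ‖f z‖ ≤ ‖f z0‖ + 1 :=
    (hca.norm.eventually_lt_const (show ‖f z0‖ < ‖f z0‖ + 1 by linarith)).mono fun _ h => h.le
  obtain ⟨ε, hε, hεU⟩ := Metric.mem_nhds_iff.1 (hb.and (hU.mem_nhds hz0))
  set M := ‖f z0‖ + 1
  have hM : 0 ≤ M := by positivity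
  refine ⟨ε / 2, by positivity, 4 * M / (ε/2) ^ 2, by positivity, ?_, ?_⟩
  · intro z hz
    apply (hεU _).2
    simpa using (by simpa [mul_div_cancel₀] using hz : dist z z0 < ε)
  intro z hz v hv
  rcases eq_or_ne v 0 with rfl | hv0
  · simp [dirD]
  have hvp : 0 < ‖v‖ := norm_pos_iff.2 hv0
  have key : ∀ t ∈ ball (0:ℂ) (ε / 2 / ‖v‖), z + t • v ∈ ball z0 ε := by
    intro t ht
    rw [mem_ball_zero_iff, lt_div_iff₀ hvp] at ht
    rw [mem_ball, dist_eq_norm] at hz ⊢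
    calc ‖z + t • v - z0‖ = ‖(z - z0) + t • v‖ := by congr 1; abel
      _ ≤ ‖z - z0‖ + ‖t • v‖ := norm_add_le _ _
      _ < ε := by rw [norm_smul]; linarith
  have := aux_one_var (g := fun t : ℂ => f (z + t • v)) (R := ε / 2 / ‖v‖) (M := M) (by positivity)
    ((hf.line z v).mono fun t ht => (hεU (key t ht)).2) (fun t ht => (hεU (key t ht)).1)
    (t := 1) (by rw [mem_ball_zero_iff, lt_div_iff₀ hvp]; simpa using hv)
  simp only [one_smul, zero_smul, add_zero, one_mul, norm_one] at this
  refine this.trans (le_of_eq ?_)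
  field_simp

theorem dirD_smul (f : E → ℂ) (z v : E) (c : ℂ) : dirD f z (c • v) = c * dirD f z v := by
  unfold dirD
  have : (fun t : ℂ => f (z + t • c • v)) = fun t : ℂ => (fun s : ℂ => f (z + s • v)) (c * t) := by
    funext t; simp [smul_smul, mul_comm]
  rw [this, deriv_comp_mul_left c (fun s : ℂ => f (z + s • v)) 0]
  simp

/-- difference quotients converge uniformly -/
theorem GH.unif {f : E → ℂ} {U : Set E} (hU : IsOpen U) (hc : ContinuousOn f U) (hf : GH f U)
    {z0 : E} (hz0 : z0 ∈ U) (v : E) : ∃ δ > 0, ball z0 (2 * δ) ⊆ U ∧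
    TendstoUniformlyOn (fun (n : ℕ) z => (n + 1 : ℂ) * (f (z + ((n + 1 : ℂ)⁻¹) • v) - f z))
      (fun z => dirD f z v) atTop (ball z0 δ) ∧ ∀ᶠ n : ℕ in atTop, ∀ z ∈ ball z0 δ,
        z + ((n + 1 : ℂ)⁻¹) • v ∈ ball z0 (2 * δ) := by
  obtain ⟨δ, hδ, C, hC, hsub, hq⟩ := hf.quad hU hc hz0
  have hn : Tendsto (fun n : ℕ => (((n:ℝ) + 1)⁻¹)) atTop (𝓝 0) := by
    simpa using tendsto_one_div_add_atTop_nhds_zero_nat (𝕜 := ℝ)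
  have hnorm : ∀ n : ℕ, ‖((n + 1 : ℂ)⁻¹) • v‖ = ((n:ℝ) + 1)⁻¹ * ‖v‖ := by
    intro n
    rw [norm_smul, norm_inv]
    congr 2
    exact_mod_cast Complex.norm_natCast (n + 1)
  have hsm : ∀ᶠ n : ℕ in atTop, ((n:ℝ) + 1)⁻¹ * ‖v‖ < δ := by
    have : Tendsto (fun n : ℕ => (((n:ℝ) + 1)⁻¹) * ‖v‖) atTop (𝓝 (0 * ‖v‖)) := hn.mul_const _
    rw [zero_mul] at this
    exact this.eventually_lt_const hδ
  refine ⟨δ, hδ, hsub, ?_, ?_⟩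
  · rw [Metric.tendstoUniformlyOn_iff]
    intro ε hε
    have h2 : ∀ᶠ n : ℕ in atTop, C * ‖v‖ ^ 2 * ((n:ℝ) + 1)⁻¹ < ε := by
      have : Tendsto (fun n : ℕ => C * ‖v‖ ^ 2 * (((n:ℝ) + 1)⁻¹)) atTop (𝓝 (C * ‖v‖ ^ 2 * 0)) :=
        hn.const_mul _
      rw [mul_zero] at this
      exact this.eventually_lt_const hε
    filter_upwards [hsm, h2] with n h1 h2 z hz
    have hq' := hq z hz (((n + 1 : ℂ)⁻¹) • v) (by rw [hnorm]; exact h1)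
    rw [dirD_smul, hnorm] at hq'
    have hn0 : (n + 1 : ℂ) ≠ 0 := by exact_mod_cast Nat.succ_ne_zero n
    have hn1 : ‖(n + 1 : ℂ)‖ = (n:ℝ) + 1 := by exact_mod_cast Complex.norm_natCast (n + 1)
    rw [dist_eq_norm, norm_sub_rev]
    have e : (n + 1 : ℂ) * (f (z + ((n + 1 : ℂ)⁻¹) • v) - f z) - dirD f z v =
        (n + 1 : ℂ) * (f (z + ((n + 1 : ℂ)⁻¹) • v) - f z - (n + 1 : ℂ)⁻¹ * dirD f z v) := by
      field_simp
    rw [e, norm_mul, hn1]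
    calc _ ≤ ((n:ℝ) + 1) * (C * (((n:ℝ) + 1)⁻¹ * ‖v‖) ^ 2) := by gcongr
      _ = C * ‖v‖ ^ 2 * ((n:ℝ) + 1)⁻¹ := by field_simp
      _ < ε := h2
  · filter_upwards [hsm] with n h1 z hz
    rw [mem_ball, dist_eq_norm] at hz ⊢
    calc _ = ‖(z - z0) + ((n + 1 : ℂ)⁻¹) • v‖ := by congr 1; abel
      _ ≤ ‖z - z0‖ + ‖((n + 1 : ℂ)⁻¹) • v‖ := norm_add_le _ _
      _ < 2 * δ := by rw [hnorm]; linarith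

theorem GH.dirD_cont {f : E → ℂ} {U : Set E} (hU : IsOpen U) (hc : ContinuousOn f U) (hf : GH f U)
    (v : E) : ContinuousOn (fun z => dirD f z v) U := by
  intro z0 hz0
  apply ContinuousAt.continuousWithinAt
  obtain ⟨δ, hδ, hsub, hlim, hev⟩ := hf.unif hU hc hz0 v
  have : ContinuousOn (fun z => dirD f z v) (ball z0 δ) := by
    apply hlim.continuousOn
    apply Eventually.frequently
    filter_upwards [hev] with n hn
    apply continuousOn_const.mul
    apply ContinuousOn.sub
    · exact hc.comp (by fun_prop) (fun z hz => hsub (hn z hz))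
    · exact hc.mono fun z hz => hsub (ball_subset_ball (by linarith) hz)
  exact this.continuousAt (ball_mem_nhds _ hδ)

theorem GH.dirD_GH {f : E → ℂ} {U : Set E} (hU : IsOpen U) (hc : ContinuousOn f U) (hf : GH f U)
    (v : E) : GH (fun z => dirD f z v) U := by
  intro z0 hz0 w
  obtain ⟨δ, hδ, hsub, hlim, hev⟩ := hf.unif hU hc hz0 v
  set V : Set ℂ := (fun t : ℂ => z0 + t • w) ⁻¹' ball z0 δ with hV
  have hVo : IsOpen V := isOpen_ball.preimage (by fun_prop)
  have h0 : (0:ℂ) ∈ V := by simp [hV, hδ]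
  have hl := (hlim.comp (fun t : ℂ => z0 + t • w)).tendstoLocallyUniformlyOn
  refine (hl.differentiableOn ?_ hVo).differentiableAt (hVo.mem_nhds h0)
  filter_upwards [hev] with n hn
  simp only [Function.comp_def]
  apply (differentiableOn_const _).mul
  apply DifferentiableOn.sub
  · have := hf.line (z0 + ((n + 1 : ℂ)⁻¹) • v) w
    refine (this.mono ?_).congr ?_
    · intro t ht
      have := hsub (hn _ ht)
      show _ ∈ U
      convert this using 1; exact add_right_comm _ _ _
    · intro t ht
      congr 1; abel
  · exact (hf.line z0 w).mono fun t ht => hsub (ball_subset_ball (by linarith) ht)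

theorem GH.dirD_add {f : E → ℂ} {U : Set E} (hU : IsOpen U) (hc : ContinuousOn f U) (hf : GH f U)
    {z0 : E} (hz0 : z0 ∈ U) (v w : E) : dirD f z0 (v + w) = dirD f z0 v + dirD f z0 w := by
  obtain ⟨δ, hδ, C, hC, hsub, hq⟩ := hf.quad hU hc hz0
  -- limits of difference quotients
  have hlin : Tendsto (fun t : ℂ => C * ‖w‖ ^ 2 * ‖t‖) (𝓝[≠] 0) (𝓝 0) := by
    have : Continuous (fun t : ℂ => C * ‖w‖ ^ 2 * ‖t‖) := by fun_prop
    simpa using (this.tendsto 0).mono_left nhdsWithin_le_nhds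
  have hsl : ∀ u : E, Tendsto (fun t : ℂ => t⁻¹ * (f (z0 + t • u) - f z0)) (𝓝[≠] 0)
      (𝓝 (dirD f z0 u)) := by
    intro u
    have := (hf z0 hz0 u).hasDerivAt.tendsto_slope
    refine this.congr ?_
    intro t
    simp [slope_def_field, div_eq_inv_mul]
  have hmove : Tendsto (fun t : ℂ => z0 + t • v) (𝓝[≠] 0) (𝓝 z0) := by
    have : Continuous (fun t : ℂ => z0 + t • v) := by fun_prop
    simpa using (this.tendsto 0).mono_left nhdsWithin_le_nhds
  have hD : Tendsto (fun t : ℂ => dirD f (z0 + t • v) w) (𝓝[≠] 0) (𝓝 (dirD f z0 w)) :=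
    (((hf.dirD_cont hU hc w).continuousAt (hU.mem_nhds hz0)).tendsto).comp hmove
  have hsmall : ∀ᶠ t : ℂ in 𝓝[≠] 0, ‖t • w‖ < δ := by
    have : Continuous (fun t : ℂ => ‖t • w‖) := by fun_prop
    have := ((this.tendsto 0).mono_left (nhdsWithin_le_nhds (s := {0}ᶜ)))
    simp only [zero_smul, norm_zero] at this
    exact this.eventually_lt_const hδ
  have hdiff : Tendsto (fun t : ℂ => t⁻¹ * (f (z0 + t • v + t • w) - f (z0 + t • v))
      - dirD f (z0 + t • v) w) (𝓝[≠] 0) (𝓝 0) := by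
    apply squeeze_zero_norm' _ hlin
    filter_upwards [hsmall, hmove.eventually (ball_mem_nhds z0 hδ), self_mem_nhdsWithin]
      with t h1 h2 h3
    have := hq _ h2 (t • w) h1
    rw [dirD_smul, norm_smul] at this
    have h3' : t ≠ 0 := h3
    have h4 : 0 < ‖t‖ := norm_pos_iff.2 h3'
    have e : t⁻¹ * (f (z0 + t • v + t • w) - f (z0 + t • v)) - dirD f (z0 + t • v) w =
      t⁻¹ * (f (z0 + t • v + t • w) - f (z0 + t • v) - t * dirD f (z0 + t • v) w) := by
      field_simp
    rw [e, norm_mul, norm_inv]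
    calc _ ≤ ‖t‖⁻¹ * (C * (‖t‖ * ‖w‖) ^ 2) := by gcongr
      _ = C * ‖w‖ ^ 2 * ‖t‖ := by field_simp
  have hsum := (hdiff.add hD).add (hsl v)
  refine tendsto_nhds_unique (hsl (v + w)) ?_
  have e0 : 0 + dirD f z0 w + dirD f z0 v = dirD f z0 v + dirD f z0 w := by ring
  rw [e0] at hsum
  refine hsum.congr ?_
  intro t
  rw [smul_add, ← add_assoc]
  ring

/-- Osgood's lemma -/
theorem GH.differentiableOn [FiniteDimensional ℂ E] {f : E → ℂ} {U : Set E} (hU : IsOpen U)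
    (hc : ContinuousOn f U) (hf : GH f U) : DifferentiableOn ℂ f U := by
  intro z0 hz0
  apply DifferentiableAt.differentiableWithinAt
  let L : E →ₗ[ℂ] ℂ :=
    { toFun := fun v => dirD f z0 v
      map_add' := fun v w => hf.dirD_add hU hc hz0 v w
      map_smul' := fun c v => dirD_smul f z0 v c }
  obtain ⟨δ, hδ, C, hC, hsub, hq⟩ := hf.quad hU hc hz0
  have : HasFDerivAt f (LinearMap.toContinuousLinearMap L) z0 := by
    rw [hasFDerivAt_iff_isLittleO_nhds_zero]
    apply Asymptotics.IsBigO.trans_isLittleO (g := fun v : E => ‖v‖ ^ 2)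
    · apply Asymptotics.IsBigO.of_bound C
      filter_upwards [ball_mem_nhds (0:E) hδ] with v hv
      have := hq z0 (mem_ball_self hδ) v (by simpa using hv)
      simpa [L] using this
    · have := Asymptotics.isLittleO_norm_pow_id (E' := E) (n := 2) (by norm_num)
      simpa using this
  exact this.differentiableAt

theorem GH_of_diff {f : E → ℂ} {U : Set E} (hU : IsOpen U) (hf : DifferentiableOn ℂ f U) :
    GH f U := by
  intro z hz v
  have h1 : DifferentiableAt ℂ f (z + (0:ℂ) • v) := by
    simpa using hf.differentiableAt (hU.mem_nhds hz)
  exact h1.comp (0:ℂ) (f := fun t : ℂ => z + t • v) (by fun_prop)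

theorem dirD_eq_fderiv {f : E → ℂ} {z : E} (hf : DifferentiableAt ℂ f z) (v : E) :
    dirD f z v = fderiv ℂ f z v := by
  have h2 : HasDerivAt (fun t : ℂ => z + t • v) v 0 := by
    simpa using ((hasDerivAt_id (0:ℂ)).smul_const v).const_add z
  have h1 : HasFDerivAt f (fderiv ℂ f z) (z + (0:ℂ) • v) := by simpa using hf.hasFDerivAt
  exact (h1.comp_hasDerivAt (0:ℂ) h2).deriv

theorem fderiv_apply_diffOn [FiniteDimensional ℂ E] {f : E → ℂ} {U : Set E} (hU : IsOpen U)
    (hf : DifferentiableOn ℂ f U) (v : E) : DifferentiableOn ℂ (fun z => fderiv ℂ f z v) U := by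
  have hg := GH_of_diff hU hf
  have h1 : DifferentiableOn ℂ (fun z => dirD f z v) U :=
    (hg.dirD_GH hU hf.continuousOn v).differentiableOn hU (hg.dirD_cont hU hf.continuousOn v)
  exact h1.congr fun z hz => (dirD_eq_fderiv (hf.differentiableAt (hU.mem_nhds hz)) v).symm

end Osgood

section Rado
open Real (circleAverage)
open ComplexConjugate

theorem rado_maxprin {R M : ℝ} {u g : ℂ → ℂ} (hR : 0 < R) (hu : ContinuousOn u (closedBall 0 R))
    (hg : ContinuousOn g (closedBall 0 R))
    (hud : ∀ z ∈ ball (0:ℂ) R, u z ≠ 0 → DifferentiableAt ℂ u z)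
    (hgd : ∀ z ∈ ball (0:ℂ) R, u z ≠ 0 → DifferentiableAt ℂ g z)
    (hM : 0 < M) (hgM : ∀ z ∈ sphere (0:ℂ) R, ‖g z‖ ≤ M) {α : ℂ} (hα : α ∈ ball (0:ℂ) R)
    (huα : u α ≠ 0) : ‖g α‖ ≤ M := by
  set Ω : Set ℂ := ball 0 R ∩ u ⁻¹' {0}ᶜ with hΩ
  have hΩo : IsOpen Ω := (hu.mono ball_subset_closedBall).isOpen_inter_preimage isOpen_ball
    isOpen_compl_singleton
  have hcl : closure Ω ⊆ closedBall 0 R :=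
    (closure_mono inter_subset_left).trans closure_ball_subset_closedBall
  obtain ⟨B, hB⟩ := (isCompact_closedBall (0:ℂ) R).exists_bound_of_continuousOn hu
  have hB0 : 0 ≤ B := (norm_nonneg _).trans (hB 0 (mem_closedBall_self hR.le))
  have key : ∀ n : ℕ, ‖g α‖ ^ n * ‖u α‖ ≤ M ^ n * B := by
    intro n
    have := Complex.norm_le_of_forall_mem_frontier_norm_le (f := fun z => g z ^ n * u z) (U := Ω)
      (C := M ^ n * B) (isBounded_ball.subset inter_subset_left) ?_ ?_ (z := α)
      (subset_closure ⟨hα, huα⟩)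
    · simpa using this
    · constructor
      · intro z hz
        exact (((hgd z hz.1 hz.2).pow n).mul (hud z hz.1 hz.2)).differentiableWithinAt
      · exact ((hg.pow n).mul hu).mono hcl
    · intro z hz
      rw [hΩo.frontier_eq] at hz
      have hzc := hcl hz.1
      by_cases h0 : u z = 0
      · simp only [h0, mul_zero, norm_zero]; positivity
      · have hs : z ∈ sphere (0:ℂ) R := by
          by_contra hs
          apply hz.2
          refine ⟨?_, h0⟩
          rw [mem_closedBall] at hzc
          exact lt_of_le_of_ne hzc hs
        rw [norm_mul, norm_pow]
        gcongr
        · exact hgM z hs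
        · exact hB z hzc
  by_contra! hlt
  have hq : 1 < ‖g α‖ / M := (one_lt_div hM).2 hlt
  have huα' : 0 < ‖u α‖ := norm_pos_iff.2 huα
  obtain ⟨n, hn⟩ := ((tendsto_pow_atTop_atTop_of_one_lt hq).eventually_gt_atTop (B / ‖u α‖)).exists
  rw [div_pow, div_lt_div_iff₀ huα' (by positivity)] at hn
  linarith [key n]

/-- the standard parametrization of the unit circle -/
noncomputable def cc (θ : AddCircle (1:ℝ)) : ℂ := fourier 1 θ

theorem cc_cont : Continuous cc := (fourier 1).continuous

theorem cc_norm (θ : AddCircle (1:ℝ)) : ‖cc θ‖ = 1 := by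
  unfold cc; rw [fourier_apply]; exact Circle.norm_coe _

theorem cc_pow (θ : AddCircle (1:ℝ)) (n : ℕ) : fourier (n : ℤ) θ = cc θ ^ n := by
  induction n with
  | zero => simp
  | succ n ih =>
    rw [pow_succ, ← ih]
    push_cast
    rw [fourier_add]; rfl

theorem cc_surj {z : ℂ} (hz : ‖z‖ = 1) : ∃ θ, cc θ = z := by
  refine ⟨(AddCircle.homeomorphCircle (T := 1) one_ne_zero).symm
    (⟨z, mem_sphere_zero_iff_norm.2 hz⟩ : Circle), ?_⟩
  unfold cc
  rw [fourier_one, ← AddCircle.homeomorphCircle_apply one_ne_zero]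
  exact congrArg (fun c : Circle => (c : ℂ)) (Homeomorph.apply_symm_apply _ _)

theorem rado_approx {R : ℝ} (hR : 0 < R) {φ : ℂ → ℂ} (hφ : ContinuousOn φ (sphere 0 R)) {ε : ℝ}
    (hε : 0 < ε) : ∃ P : ℂ → ℂ, Differentiable ℂ P ∧
      ∀ z ∈ sphere (0:ℂ) R, |(P z).re - (φ z).re| ≤ ε := by
  have hmem : ∀ θ : AddCircle (1:ℝ), (R:ℂ) * cc θ ∈ sphere (0:ℂ) R := by
    intro θ; simp [abs_of_pos hR, cc_norm]
  have hR0 : (R:ℂ) ≠ 0 := by exact_mod_cast hR.ne'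
  let k : C(AddCircle (1:ℝ), ℂ) := ⟨fun θ => φ (R * cc θ), by
    refine hφ.comp_continuous ?_ hmem
    exact continuous_const.mul cc_cont⟩
  have hk : k ∈ (Submodule.span ℂ (range <| @fourier 1)).topologicalClosure := by
    rw [span_fourier_closure_eq_top]; trivial
  obtain ⟨q, hq, hkq⟩ := Metric.mem_closure_iff.1 hk ε hε
  have hrep : ∃ P Q : ℂ → ℂ, Differentiable ℂ P ∧ Differentiable ℂ Q ∧ ∀ θ,
      q θ = P (R * cc θ) + conj (Q (R * cc θ)) := by
    clear hkq
    induction hq using Submodule.span_induction with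
    | mem x hx =>
      obtain ⟨n, rfl⟩ := hx
      obtain ⟨n, rfl | rfl⟩ := n.eq_nat_or_neg
      · refine ⟨fun z => (z / R) ^ n, fun _ => 0, by fun_prop, by fun_prop, fun θ => ?_⟩
        simp only [mul_div_cancel_left₀ _ hR0]
        rw [cc_pow]; simp
      · refine ⟨fun _ => 0, fun z => (z / R) ^ n, by fun_prop, by fun_prop, fun θ => ?_⟩
        simp only [mul_div_cancel_left₀ _ hR0]
        rw [fourier_neg, cc_pow]; simp
    | zero => exact ⟨fun _ => 0, fun _ => 0, by fun_prop, by fun_prop, fun θ => by simp⟩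
    | add x y _ _ hx hy =>
      obtain ⟨P, Q, hP, hQ, h⟩ := hx
      obtain ⟨P', Q', hP', hQ', h'⟩ := hy
      refine ⟨P + P', Q + Q', hP.add hP', hQ.add hQ', fun θ => ?_⟩
      simp only [ContinuousMap.add_apply, h, h', Pi.add_apply, map_add]; ring
    | smul a x _ hx =>
      obtain ⟨P, Q, hP, hQ, h⟩ := hx
      refine ⟨fun z => a * P z, fun z => conj a * Q z, by fun_prop, by fun_prop, fun θ => ?_⟩
      simp only [ContinuousMap.smul_apply, h, smul_eq_mul, map_mul, Complex.conj_conj]; ring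
  obtain ⟨P, Q, hP, hQ, h⟩ := hrep
  refine ⟨fun z => P z + Q z, hP.add hQ, fun z hz => ?_⟩
  obtain ⟨θ, hθ⟩ : ∃ θ : AddCircle (1:ℝ), (R:ℂ) * cc θ = z := by
    have hz1 : ‖z / R‖ = 1 := by
      have : ‖z‖ = R := by simpa using hz
      simp [this, abs_of_pos hR, hR.ne']
    obtain ⟨θ, hθ⟩ := cc_surj hz1
    refine ⟨θ, ?_⟩
    rw [hθ]; field_simp
  have h1 : dist (k θ) (q θ) ≤ ε := (ContinuousMap.dist_apply_le_dist θ).trans hkq.le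
  have h2 : k θ = φ z := by simp [k, hθ]
  rw [h2, h, hθ, dist_eq_norm] at h1
  have h3 := (Complex.abs_re_le_norm _).trans h1
  rw [abs_sub_comm]
  simpa using h3

/-- the Herglotz integral of the real part -/
noncomputable def herg (R : ℝ) (φ : ℂ → ℂ) (w : ℂ) : ℂ :=
  circleAverage (fun ζ ↦ herglotzRieszKernel 0 w ζ • (((φ ζ).re : ℝ) : ℂ)) 0 R

theorem rado_re {R : ℝ} {u φ : ℂ → ℂ} (hR : 0 < R) (hu : ContinuousOn u (closedBall 0 R))
    (hφ : ContinuousOn φ (closedBall 0 R))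
    (hud : ∀ z ∈ ball (0:ℂ) R, u z ≠ 0 → DifferentiableAt ℂ u z)
    (hφd : ∀ z ∈ ball (0:ℂ) R, u z ≠ 0 → DifferentiableAt ℂ φ z)
    {w : ℂ} (hw : w ∈ ball (0:ℂ) R)
    (huw : u w ≠ 0) : (φ w).re = (herg R φ w).re := by
  have hRabs : |R| = R := abs_of_pos hR
  have hφs : ContinuousOn φ (sphere 0 R) := hφ.mono sphere_subset_closedBall
  have hre : ContinuousOn (fun z => (φ z).re) (sphere 0 R) :=
    Complex.continuous_re.comp_continuousOn hφs
  have hreI : CircleIntegrable (fun z => (φ z).re) 0 R := hre.circleIntegrable hR.le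
  unfold herg
  rw [re_circleAverage_herglotzRieszKernel_smul hreI hw]
  have hker : ContinuousOn (Complex.re ∘ herglotzRieszKernel 0 w) (sphere 0 R) := by
    have := continuousOn_herglotzRieszKernel_sphere hw
    rw [hRabs] at this
    exact Complex.continuous_re.comp_continuousOn this
  obtain ⟨C, hC⟩ := (isCompact_sphere (0:ℂ) R).exists_bound_of_continuousOn hker
  have hC0 : 0 ≤ C := by
    obtain ⟨z, hz⟩ : (sphere (0:ℂ) R).Nonempty := NormedSpace.sphere_nonempty.mpr hR.le
    exact (norm_nonneg _).trans (hC z hz)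
  have main : ∀ ε > 0, |(φ w).re - circleAverage ((Complex.re ∘ herglotzRieszKernel 0 w) •
      fun z => (φ z).re) 0 R| ≤ (1 + C) * ε := by
    intro ε hε
    obtain ⟨P, hP, hPφ⟩ := rado_approx hR hφs hε
    have h1 : |(φ w).re - (P w).re| ≤ ε := by
      have ha : ‖Complex.exp (φ w - P w)‖ ≤ Real.exp ε := by
        refine rado_maxprin (g := fun z => Complex.exp (φ z - P z)) hR hu ?_ hud ?_
          (Real.exp_pos _) ?_ hw huw
        · exact (hφ.sub hP.continuous.continuousOn).cexp
        · exact fun z hz h0 => ((hφd z hz h0).sub (hP z)).cexp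
        · intro z hz
          rw [Complex.norm_exp, Real.exp_le_exp, Complex.sub_re]
          have := abs_le.1 (hPφ z hz)
          linarith
      have hb : ‖Complex.exp (P w - φ w)‖ ≤ Real.exp ε := by
        refine rado_maxprin (g := fun z => Complex.exp (P z - φ z)) hR hu ?_ hud ?_
          (Real.exp_pos _) ?_ hw huw
        · exact (hP.continuous.continuousOn.sub hφ).cexp
        · exact fun z hz h0 => ((hP z).sub (hφd z hz h0)).cexp
        · intro z hz
          rw [Complex.norm_exp, Real.exp_le_exp, Complex.sub_re]
          have := abs_le.1 (hPφ z hz)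
          linarith
      rw [Complex.norm_exp, Real.exp_le_exp, Complex.sub_re] at ha hb
      rw [abs_le]; constructor <;> linarith
    have h2 : (P w).re = circleAverage ((Complex.re ∘ herglotzRieszKernel 0 w) •
      fun z => (P z).re) 0 R := by
      have e := (hP.diffContOnCl (s := ball 0 R)).circleAverage_re_herglotzRieszKernel_smul hw
      have hI : CircleIntegrable ((Complex.re ∘ herglotzRieszKernel 0 w) • P) 0 R :=
        (hker.smul hP.continuous.continuousOn).circleIntegrable hR.le
      rw [← e]
      have := Complex.reCLM.circleAverage_comp_comm hI
      rw [Complex.reCLM_apply] at this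
      rw [← this]
      congr 1
      funext z
      simp
    have hIP : CircleIntegrable ((Complex.re ∘ herglotzRieszKernel 0 w) • fun z => (P z).re) 0 R :=
      (hker.smul (Complex.continuous_re.comp hP.continuous).continuousOn).circleIntegrable hR.le
    have hIφ : CircleIntegrable ((Complex.re ∘ herglotzRieszKernel 0 w) • fun z => (φ z).re) 0 R :=
      (hker.smul hre).circleIntegrable hR.le
    have h3 : |circleAverage ((Complex.re ∘ herglotzRieszKernel 0 w) • fun z => (P z).re) 0 R -
        circleAverage ((Complex.re ∘ herglotzRieszKernel 0 w) • fun z => (φ z).re) 0 R|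
        ≤ C * ε := by
      rw [← Real.circleAverage_sub hIP hIφ]
      refine Real.abs_circleAverage_le_circleAverage_abs.trans ?_
      apply Real.circleAverage_mono_on_of_le_circle
      · exact (hIP.sub hIφ).abs
      · intro z hz
        rw [hRabs] at hz
        have e : |((Complex.re ∘ herglotzRieszKernel 0 w) • fun z => (P z).re) -
            ((Complex.re ∘ herglotzRieszKernel 0 w) • fun z => (φ z).re)| z =
            ‖(Complex.re ∘ herglotzRieszKernel 0 w) z‖ * |(P z).re - (φ z).re| := by
          rw [Pi.abs_apply, Pi.sub_apply, Pi.smul_apply', Pi.smul_apply', smul_eq_mul,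
            smul_eq_mul, ← mul_sub, abs_mul, Real.norm_eq_abs]
        refine e.le.trans ?_
        exact mul_le_mul (hC z hz) (hPφ z hz) (abs_nonneg _) hC0
    calc _ ≤ |(φ w).re - (P w).re| + |(P w).re - circleAverage
          ((Complex.re ∘ herglotzRieszKernel 0 w) • fun z => (φ z).re) 0 R| := abs_sub_le _ _ _
      _ ≤ ε + C * ε := by rw [h2] at h1 ⊢; exact add_le_add h1 h3
      _ = _ := by ring
  by_contra hne
  have hpos := abs_pos.2 (sub_ne_zero.2 hne)
  have := main (|(φ w).re - circleAverage ((Complex.re ∘ herglotzRieszKernel 0 w) •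
      fun z => (φ z).re) 0 R| / (2 * (1 + C))) (by positivity)
  have e : (1 + C) * (|(φ w).re - circleAverage ((Complex.re ∘ herglotzRieszKernel 0 w) •
      fun z => (φ z).re) 0 R| / (2 * (1 + C))) = |(φ w).re - circleAverage
      ((Complex.re ∘ herglotzRieszKernel 0 w) • fun z => (φ z).re) 0 R| / 2 := by
    field_simp
  rw [e] at this
  linarith

theorem herg_diff {R : ℝ} {φ : ℂ → ℂ} (hR : 0 < R) (hφ : ContinuousOn φ (closedBall 0 R)) :
    DifferentiableOn ℂ (herg R φ) (ball 0 R) := by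
  apply differentiableOn_circleAverage_herglotzRieszKernel_smul
  have hre : ContinuousOn (fun z => (((φ z).re : ℝ) : ℂ)) (sphere 0 R) :=
    Complex.continuous_ofReal.comp_continuousOn
      (Complex.continuous_re.comp_continuousOn (hφ.mono sphere_subset_closedBall))
  exact hre.circleIntegrable hR.le

theorem deriv_eq_of_re {f g : ℂ → ℂ} {z : ℂ} (hf : DifferentiableAt ℂ f z)
    (hg : DifferentiableAt ℂ g z) (h : ∀ᶠ w in 𝓝 z, (f w).re = (g w).re) :
    deriv f z = deriv g z := by
  have h1 : HasDerivAt (fun w => f w - g w) (deriv f z - deriv g z) z :=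
    hf.hasDerivAt.sub hg.hasDerivAt
  set c := deriv f z - deriv g z with hc
  have h2 : HasFDerivAt (fun w => (f w - g w).re) (Complex.reCLM.comp
      ((ContinuousLinearMap.toSpanSingleton ℂ c).restrictScalars ℝ)) z :=
    Complex.reCLM.hasFDerivAt.comp z (h1.hasFDerivAt.restrictScalars ℝ)
  have h3 : HasFDerivAt (fun w => (f w - g w).re) (0 : ℂ →L[ℝ] ℝ) z := by
    refine (hasFDerivAt_const (0:ℝ) z).congr_of_eventuallyEq ?_
    filter_upwards [h] with w hw
    simp [hw]
  have h4 := h2.unique h3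
  have e1 := DFunLike.congr_fun h4 1
  have e2 := DFunLike.congr_fun h4 Complex.I
  simp at e1 e2
  have : c = 0 := Complex.ext e1 e2
  exact sub_eq_zero.1 this

theorem rado_disc {R : ℝ} {u φ : ℂ → ℂ} (hR : 0 < R) (hu : ContinuousOn u (closedBall 0 R))
    (hφ : ContinuousOn φ (closedBall 0 R))
    (hud : ∀ z ∈ ball (0:ℂ) R, u z ≠ 0 → DifferentiableAt ℂ u z)
    (hφd : ∀ z ∈ ball (0:ℂ) R, u z ≠ 0 → DifferentiableAt ℂ φ z)
    (hdense : ball (0:ℂ) R ⊆ closure {z | z ∈ ball (0:ℂ) R ∧ u z ≠ 0}) :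
    DifferentiableOn ℂ φ (ball 0 R) := by
  set Ω : Set ℂ := {z | z ∈ ball (0:ℂ) R ∧ u z ≠ 0} with hΩ
  have hΩo : IsOpen Ω := (hu.mono ball_subset_closedBall).isOpen_inter_preimage isOpen_ball
    isOpen_compl_singleton
  have hΩs : Ω ⊆ ball 0 R := fun z hz => hz.1
  have hφ' : ContinuousOn (fun z => -Complex.I * φ z) (closedBall 0 R) := continuousOn_const.mul hφ
  have hH := herg_diff hR hφ
  have hK := herg_diff hR hφ'
  set H := herg R φ
  set K := herg R (fun z => -Complex.I * φ z)
  have hφb := hφ.mono ball_subset_closedBall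
  have hφb' := hφ'.mono ball_subset_closedBall
  have r1 : EqOn (fun z => (φ z).re) (fun z => (H z).re) (ball 0 R) := by
    refine Set.EqOn.of_subset_closure (s := Ω) ?_ (Complex.continuous_re.comp_continuousOn hφb)
      (Complex.continuous_re.comp_continuousOn hH.continuousOn) hΩs hdense
    exact fun z hz => rado_re hR hu hφ hud hφd hz.1 hz.2
  have r2 : EqOn (fun z => (-Complex.I * φ z).re) (fun z => (K z).re) (ball 0 R) := by
    refine Set.EqOn.of_subset_closure (s := Ω) ?_ (Complex.continuous_re.comp_continuousOn hφb')
      (Complex.continuous_re.comp_continuousOn hK.continuousOn) hΩs hdense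
    exact fun z hz => rado_re hR hu hφ' hud (fun z hz h => (hφd z hz h).const_mul _) hz.1 hz.2
  have d : EqOn (deriv K) (fun z => -Complex.I * deriv H z) (ball 0 R) := by
    refine Set.EqOn.of_subset_closure (s := Ω) ?_ (hK.deriv isOpen_ball).continuousOn
      (continuousOn_const.mul (hH.deriv isOpen_ball).continuousOn) hΩs hdense
    intro z hz
    have hnb : ∀ᶠ w in 𝓝 z, w ∈ ball (0:ℂ) R := isOpen_ball.mem_nhds hz.1
    have hd := hφd z hz.1 hz.2
    have a1 : deriv φ z = deriv H z :=
      deriv_eq_of_re hd (hH.differentiableAt hnb) (hnb.mono fun w hw => r1 hw)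
    have a2 : deriv (fun z => -Complex.I * φ z) z = deriv K z :=
      deriv_eq_of_re (hd.const_mul _) (hK.differentiableAt hnb) (hnb.mono fun w hw => r2 hw)
    rw [deriv_const_mul _ hd] at a2
    show deriv K z = -Complex.I * deriv H z
    rw [← a2, a1]
  obtain ⟨a, ha⟩ := isOpen_ball.exists_is_const_of_deriv_eq_zero
    (convex_ball (0:ℂ) R).isPreconnected (f := fun z => K z + Complex.I * H z)
    (hK.add (hH.const_mul _)) (by
      intro z hz
      have hnb := isOpen_ball.mem_nhds hz
      have := deriv_fun_add (hK.differentiableAt hnb)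
        ((hH.differentiableAt hnb).const_mul Complex.I)
      rw [this, deriv_const_mul _ (hH.differentiableAt hnb), d hz]
      simp)
  have : EqOn φ (fun z => H z + Complex.I * (a.re : ℂ)) (ball 0 R) := by
    intro z hz
    have e1 := r1 hz
    have e2 := r2 hz
    have e3 := ha z hz
    have e4 := congrArg Complex.re e3
    simp at e1 e2 e4
    apply Complex.ext
    · simp [e1]
    · simp; linarith
  exact (hH.add_const _).congr this

theorem rado_dense {V : Set ℂ} (hV : IsOpen V) (hVc : IsPreconnected V) {u : ℂ → ℂ}
    (hu : ContinuousOn u V) (hud : ∀ z ∈ V, u z ≠ 0 → DifferentiableAt ℂ u z)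
    (hne : ∃ z ∈ V, u z ≠ 0) : V ⊆ closure {z | z ∈ V ∧ u z ≠ 0} := by
  set Ω : Set ℂ := {z | z ∈ V ∧ u z ≠ 0} with hΩ
  have hΩo : IsOpen Ω := hu.isOpen_inter_preimage hV isOpen_compl_singleton
  refine Subset.trans ?_ (interior_subset (s := closure Ω))
  apply hVc.subset_of_closure_inter_subset isOpen_interior
  · obtain ⟨z, hz, hz0⟩ := hne
    exact ⟨z, hz, interior_maximal subset_closure hΩo ⟨hz, hz0⟩⟩
  rintro p ⟨hp, hpV⟩
  have hpc : p ∈ closure Ω := closure_minimal interior_subset isClosed_closure hp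
  by_contra hpi
  obtain ⟨s, hs, hsV⟩ := Metric.nhds_basis_closedBall.mem_iff.1 (hV.mem_nhds hpV)
  obtain ⟨β, hβ, hβΩ⟩ : ∃ β ∈ ball p (s / 8), β ∉ closure Ω := by
    by_contra! hcon
    exact hpi (mem_interior.2 ⟨ball p (s / 8), hcon, isOpen_ball, mem_ball_self (by positivity)⟩)
  obtain ⟨α, hαΩ, hα⟩ := Metric.mem_closure_iff.1 hpc (s / 8) (by positivity)
  rw [mem_ball] at hβ
  rw [dist_comm] at hα
  obtain ⟨B, hB⟩ := (isCompact_closedBall p s).exists_bound_of_continuousOn (hu.mono hsV)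
  have hB0 : 0 ≤ B := (norm_nonneg _).trans (hB p (mem_closedBall_self hs.le))
  set W := ball p s ∩ Ω with hW
  have hWo : IsOpen W := isOpen_ball.inter hΩo
  have hcl : closure W ⊆ closedBall p s :=
    (closure_mono inter_subset_left).trans closure_ball_subset_closedBall
  have hβn : ∀ z ∈ closure W, z - β ≠ 0 := by
    intro z hz h0
    rw [sub_eq_zero] at h0
    exact hβΩ (h0 ▸ closure_mono inter_subset_right hz)
  have hαW : α ∈ W := ⟨hα.trans (by linarith), hαΩ⟩
  have key : ∀ n : ℕ, 2 ^ n * ‖u α‖ ≤ B := by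
    intro n
    have := Complex.norm_le_of_forall_mem_frontier_norm_le
      (f := fun z => (((s / 2 : ℝ) : ℂ) / (z - β)) ^ n * u z) (U := W)
      (C := B) (isBounded_ball.subset inter_subset_left) ?_ ?_ (z := α)
      (subset_closure hαW)
    · refine le_trans ?_ this
      rw [norm_mul, norm_pow]
      gcongr
      rw [norm_div, Complex.norm_real, Real.norm_eq_abs, abs_of_pos (by positivity),
        le_div_iff₀ (norm_pos_iff.2 (hβn α (subset_closure hαW))), ← dist_eq_norm]
      have := dist_triangle α p β
      rw [dist_comm p β] at this
      linarith
    · constructor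
      · intro z hz
        apply DifferentiableAt.differentiableWithinAt
        have h1 := hud z hz.2.1 hz.2.2
        have h2 := hβn z (subset_closure hz)
        fun_prop (disch := assumption)
      · refine ContinuousOn.mul ?_ (hu.mono (hcl.trans hsV))
        exact (continuousOn_const.div (by fun_prop) hβn).pow n
    · intro z hz
      rw [hWo.frontier_eq] at hz
      have hzc := hcl hz.1
      by_cases h0 : u z = 0
      · simp only [h0, mul_zero, norm_zero]; positivity
      · have hsz : dist z p = s := by
          by_contra hne
          apply hz.2
          exact ⟨lt_of_le_of_ne hzc hne, hsV hzc, h0⟩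
        rw [norm_mul, norm_pow]
        have : ‖((s / 2 : ℝ) : ℂ) / (z - β)‖ ≤ 1 := by
          rw [norm_div, Complex.norm_real, Real.norm_eq_abs, abs_of_pos (by positivity),
            div_le_one (norm_pos_iff.2 (hβn z hz.1)), ← dist_eq_norm]
          have := dist_triangle z β p
          linarith
        calc _ ≤ 1 * B := mul_le_mul (pow_le_one₀ (norm_nonneg _) this) (hB z hzc)
              (norm_nonneg _) zero_le_one
          _ = B := one_mul B
  have hα0 : 0 < ‖u α‖ := norm_pos_iff.2 hαΩ.2
  obtain ⟨n, hn⟩ := ((tendsto_pow_atTop_atTop_of_one_lt (one_lt_two (α := ℝ))).eventually_gt_atTop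
    (B / ‖u α‖)).exists
  rw [div_lt_iff₀ hα0] at hn
  linarith [key n]

/-- A version of Radó's theorem. -/
theorem rado_main {V : Set ℂ} (hV : IsOpen V) (hVc : IsPreconnected V) {u φ : ℂ → ℂ}
    (hu : ContinuousOn u V) (hφ : ContinuousOn φ V)
    (hud : ∀ z ∈ V, u z ≠ 0 → DifferentiableAt ℂ u z)
    (hφd : ∀ z ∈ V, u z ≠ 0 → DifferentiableAt ℂ φ z)
    (hne : ∃ z ∈ V, u z ≠ 0) : DifferentiableOn ℂ φ V := by
  intro p hp
  apply DifferentiableAt.differentiableWithinAt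
  have hd := rado_dense hV hVc hu hud hne
  obtain ⟨R, hR, hRV⟩ := Metric.nhds_basis_closedBall.mem_iff.1 (hV.mem_nhds hp)
  have hm : ∀ z ∈ closedBall (0:ℂ) R, z + p ∈ V := fun z hz => hRV (by simpa using hz)
  have hm' : ∀ z ∈ ball (0:ℂ) R, z + p ∈ V := fun z hz => hm z (ball_subset_closedBall hz)
  have hcont : ContinuousOn (fun z : ℂ => z + p) (closedBall 0 R) := by fun_prop
  have := rado_disc (u := fun z => u (z + p)) (φ := fun z => φ (z + p)) hR
    (hu.comp hcont hm) (hφ.comp hcont hm)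
    (fun z hz h0 => (hud _ (hm' z hz) h0).comp z (f := fun z => z + p) (by fun_prop))
    (fun z hz h0 => (hφd _ (hm' z hz) h0).comp z (f := fun z => z + p) (by fun_prop)) ?_
  · have h1 : DifferentiableAt ℂ (fun z => φ (z + p)) (p - p) := by
      rw [sub_self]
      exact this.differentiableAt (ball_mem_nhds _ hR)
    have h2 := h1.comp p (f := fun z => z - p) (by fun_prop)
    simpa [Function.comp_def] using h2
  · intro z hz
    rw [Metric.mem_closure_iff]
    intro ε hε
    have hz' : dist z 0 < R := hz
    obtain ⟨y, hy, hyd⟩ := Metric.mem_closure_iff.1 (hd (hm' z hz)) (min ε (R - dist z 0))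
      (lt_min hε (by linarith))
    have e : dist z (y - p) = dist (z + p) y := by simp [dist_eq_norm, sub_sub_eq_add_sub]
    refine ⟨y - p, ⟨?_, by simpa using hy.2⟩, ?_⟩
    · have h1 := hyd.trans_le (min_le_right _ _)
      rw [← e] at h1
      have := dist_triangle (y - p) z 0
      rw [dist_comm (y - p) z] at this
      rw [mem_ball]; linarith
    · rw [e]; exact hyd.trans_le (min_le_left _ _)

end Rado

section Alg

variable {d : ℕ}

/-- Jacobian matrix of a tuple of functions. -/
noncomputable def jacM (g : Fin d → (Fin d → ℂ) → ℂ) (x : Fin d → ℂ) : Matrix (Fin d) (Fin d) ℂ :=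
  Matrix.of fun i k => fderiv ℂ (g i) x (Pi.single k 1)

lemma clm_eq_dot (L : (Fin d → ℂ) →L[ℂ] ℂ) (v : Fin d → ℂ) :
    (fun k => L (Pi.single k 1)) ⬝ᵥ v = L v := by
  have hv : v = ∑ k, v k • (Pi.single k (1 : ℂ) : Fin d → ℂ) := by
    ext i
    simp [Finset.sum_apply, Pi.single_apply]
  conv_rhs => rw [hv]
  simp [dotProduct, mul_comm]

lemma jacM_mulVec (g : Fin d → (Fin d → ℂ) → ℂ) (x v : Fin d → ℂ) :
    (jacM g x).mulVec v = fun i => fderiv ℂ (g i) x v := by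
  ext i
  exact clm_eq_dot (fderiv ℂ (g i) x) v

lemma jac_diffOn {X : Set (Fin d → ℂ)} (hX : IsOpen X) {g : Fin d → (Fin d → ℂ) → ℂ}
    (hg : ∀ i, DifferentiableOn ℂ (g i) X) :
    DifferentiableOn ℂ (fun x => (jacM g x).det) X := by
  simp only [Matrix.det_apply]
  refine DifferentiableOn.fun_sum fun σ _ => ?_
  refine DifferentiableOn.const_smul ?_ _
  intro x hx
  exact (HasFDerivWithinAt.finsetProd (𝕜 := ℂ) (u := Finset.univ)
    (g := fun i x => fderiv ℂ (g (σ i)) x (Pi.single i 1))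
    fun i _ => (fderiv_apply_diffOn hX (hg _) _ x hx).hasFDerivWithinAt).differentiableWithinAt

lemma strict_of_diffOn {X : Set (Fin d → ℂ)} (hX : IsOpen X) {f : (Fin d → ℂ) → ℂ}
    (hf : DifferentiableOn ℂ f X) {x : Fin d → ℂ} (hx : x ∈ X) :
    HasStrictFDerivAt f (fderiv ℂ f x) x := by
  apply hasStrictFDerivAt_of_hasFDerivAt_of_continuousAt
  · filter_upwards [hX.mem_nhds hx] with y hy
    exact (hf.differentiableAt (hX.mem_nhds hy)).hasFDerivAt
  · have : ContinuousOn (fderiv ℂ f) X :=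
      continuousOn_clm_apply.2 fun v => (fderiv_apply_diffOn hX hf v).continuousOn
    exact this.continuousAt (hX.mem_nhds hx)

lemma exists_equiv {X : Set (Fin d → ℂ)} (hX : IsOpen X) {g : Fin d → (Fin d → ℂ) → ℂ}
    (hg : ∀ i, DifferentiableOn ℂ (g i) X) {x : Fin d → ℂ} (hx : x ∈ X)
    (hdet : (jacM g x).det ≠ 0) :
    ∃ A : (Fin d → ℂ) ≃L[ℂ] (Fin d → ℂ),
      HasStrictFDerivAt (fun x i => g i x) (A : (Fin d → ℂ) →L[ℂ] (Fin d → ℂ)) x := by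
  set L : (Fin d → ℂ) →L[ℂ] (Fin d → ℂ) := ContinuousLinearMap.pi fun i => fderiv ℂ (g i) x
    with hL
  have hLd : L.det ≠ 0 := by
    have : (L : (Fin d → ℂ) →ₗ[ℂ] (Fin d → ℂ)) = Matrix.toLin' (jacM g x) := by
      apply LinearMap.ext
      intro v
      rw [Matrix.toLin'_apply, jacM_mulVec]
      rfl
    rw [ContinuousLinearMap.det, this, LinearMap.det_toLin']
    exact hdet
  refine ⟨L.toContinuousLinearEquivOfDetNeZero hLd, ?_⟩
  rw [ContinuousLinearMap.coe_toContinuousLinearEquivOfDetNeZero]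
  exact hasStrictFDerivAt_pi.2 fun i => strict_of_diffOn hX (hg i) hx

lemma inv_lemma {X : Set (Fin d → ℂ)} (hX : IsOpen X) {g : Fin d → (Fin d → ℂ) → ℂ}
    (hg : ∀ i, DifferentiableOn ℂ (g i) X) {x : Fin d → ℂ} (hx : x ∈ X)
    (hdet : (jacM g x).det ≠ 0) :
    ∃ ψ : (Fin d → ℂ) → (Fin d → ℂ), ∃ W : Set (Fin d → ℂ), IsOpen W ∧
      (fun i => g i x) ∈ W ∧ DifferentiableOn ℂ ψ W ∧
      (∀ w ∈ W, ψ w ∈ X ∧ (fun i => g i (ψ w)) = w ∧ (jacM g (ψ w)).det ≠ 0) ∧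
      ψ (fun i => g i x) = x ∧ ∀ᶠ z in 𝓝 x, ψ (fun i => g i z) = z := by
  obtain ⟨A, hA⟩ := exists_equiv hX hg hx hdet
  set e := hA.toOpenPartialHomeomorph (fun x i => g i x) with he
  have hxs : x ∈ e.source := hA.mem_toOpenPartialHomeomorph_source
  set S : Set (Fin d → ℂ) := X ∩ (fun x => (jacM g x).det) ⁻¹' {0}ᶜ with hS
  have hSo : IsOpen S := (jac_diffOn hX hg).continuousOn.isOpen_inter_preimage hX
    isOpen_compl_singleton
  have hleft : ∀ᶠ z in 𝓝 x, e.symm (fun i => g i z) = z := hA.eventually_left_inverse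
  have hself : e.symm (fun i => g i x) = x := hleft.self_of_nhds
  refine ⟨e.symm, e.target ∩ e.symm ⁻¹' S, e.symm.isOpen_inter_preimage hSo, ?_, ?_, ?_,
    hself, hleft⟩
  · refine ⟨hA.image_mem_toOpenPartialHomeomorph_target, ?_⟩
    rw [mem_preimage, hself]
    exact ⟨hx, hdet⟩
  · intro w hw
    obtain ⟨A', hA'⟩ := exists_equiv hX hg hw.2.1 hw.2.2
    exact (e.hasFDerivAt_symm hw.1 hA'.hasFDerivAt).differentiableAt.differentiableWithinAt
  · intro w hw
    exact ⟨hw.2.1, e.right_inv hw.1, hw.2.2⟩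

lemma det_update_aux (M : Matrix (Fin d) (Fin d) ℂ) (j : Fin d) (b v : Fin d → ℂ)
    (hv : M.mulVec v = Pi.single j 1) : (b ⬝ᵥ v) * M.det = (M.updateRow j b).det := by
  have h1 : M.adjugate.mulVec (M.mulVec v) = M.det • v := by
    rw [Matrix.mulVec_mulVec, Matrix.adjugate_mul, Matrix.smul_mulVec, Matrix.one_mulVec]
  rw [hv] at h1
  rw [mul_comm, ← smul_eq_mul, ← dotProduct_smul, ← h1, ← Matrix.cramer_transpose_apply,
    Matrix.cramer_eq_adjugate_mulVec, ← Matrix.adjugate_transpose]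
  simp [Matrix.mulVec, dotProduct, mul_comm, Pi.single_apply]

lemma curve_contra {X : Set (Fin d → ℂ)} (hX : IsOpen X) {F B : Set ((Fin d → ℂ) → ℂ)}
    (hFsep : ∀ x ∈ X, ∀ y ∈ X, x ≠ y → ∃ f ∈ F, f x ≠ f y) (hFB : F ⊆ B)
    (hB : ∀ h ∈ B, DifferentiableOn ℂ h X) {g : Fin d → (Fin d → ℂ) → ℂ}
    (hg : ∀ i, DifferentiableOn ℂ (g i) X) {x : Fin d → ℂ} (hx : x ∈ X)
    (hdet : (jacM g x).det ≠ 0) (j : Fin d)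
    (hstep : ∀ h ∈ B, (fun z => (jacM (Function.update g j h) z).det) ∈ B ∧
      (jacM (Function.update g j h) x).det = 0) : False := by
  obtain ⟨ψ, W, hWo, hxW, hψ, hW, hψx, -⟩ := inv_lemma hX hg hx hdet
  set ℓ : ℂ → (Fin d → ℂ) := fun t => (fun i => g i x) + t • Pi.single j 1 with hℓ
  have hℓd : ∀ t, HasDerivAt ℓ (Pi.single j 1) t := by
    intro t
    have := ((hasDerivAt_id t).smul_const (Pi.single j (1 : ℂ) : Fin d → ℂ)).const_add
      (fun i => g i x)
    simpa [hℓ] using this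
  have hℓc : Continuous ℓ := continuous_iff_continuousAt.2 fun t => (hℓd t).continuousAt
  have hℓ0 : ℓ 0 = fun i => g i x := by simp [hℓ]
  obtain ⟨r, hr, hball⟩ : ∃ r > 0, ball (0 : ℂ) r ⊆ ℓ ⁻¹' W :=
    Metric.isOpen_iff.1 (hWo.preimage hℓc) 0 (by rw [mem_preimage, hℓ0]; exact hxW)
  set γ : ℂ → (Fin d → ℂ) := fun t => ψ (ℓ t) with hγ
  have hγ0 : γ 0 = x := by simp only [hγ, hℓ0, hψx]
  have hγX : ∀ t ∈ ball (0 : ℂ) r, γ t ∈ X := fun t ht => (hW _ (hball ht)).1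
  have hGγ : ∀ t ∈ ball (0 : ℂ) r, (fun i => g i (γ t)) = ℓ t :=
    fun t ht => (hW _ (hball ht)).2.1
  have hγd : ∀ t ∈ ball (0 : ℂ) r, DifferentiableAt ℂ γ t := fun t ht =>
    (hψ.differentiableAt (hWo.mem_nhds (hball ht))).comp t (hℓd t).differentiableAt
  have hcomp : ∀ f : (Fin d → ℂ) → ℂ, DifferentiableOn ℂ f X → ∀ t ∈ ball (0 : ℂ) r,
      HasDerivAt (fun s => f (γ s)) (fderiv ℂ f (γ t) (deriv γ t)) t := by
    intro f hf t ht
    exact (hf.differentiableAt (hX.mem_nhds (hγX t ht))).hasFDerivAt.comp_hasDerivAt t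
      (hγd t ht).hasDerivAt
  have hM : ∀ t ∈ ball (0 : ℂ) r, (jacM g (γ t)).mulVec (deriv γ t) = Pi.single j 1 := by
    intro t ht
    rw [jacM_mulVec]
    have h1 : HasDerivAt (fun s => fun i => g i (γ s))
        (fun i => fderiv ℂ (g i) (γ t) (deriv γ t)) t :=
      hasDerivAt_pi.2 fun i => hcomp (g i) (hg i) t ht
    have h2 : (fun s => fun i => g i (γ s)) =ᶠ[𝓝 t] ℓ := by
      filter_upwards [isOpen_ball.mem_nhds ht] with s hs
      exact hGγ s hs
    exact h1.unique ((hℓd t).congr_of_eventuallyEq h2)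
  have hrel : ∀ h, DifferentiableOn ℂ h X → ∀ t ∈ ball (0 : ℂ) r,
      deriv (fun s => h (γ s)) t * (jacM g (γ t)).det
        = (jacM (Function.update g j h) (γ t)).det := by
    intro h hh t ht
    rw [(hcomp h hh t ht).deriv, ← clm_eq_dot, det_update_aux _ j _ _ (hM t ht)]
    congr 1
    ext i k
    by_cases hij : i = j
    · subst hij
      simp [jacM]
    · simp [jacM, hij, Matrix.updateRow_ne]
  have han : ∀ f : (Fin d → ℂ) → ℂ, DifferentiableOn ℂ f X →
      AnalyticOnNhd ℂ (fun s => f (γ s)) (ball 0 r) := by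
    intro f hf
    apply DifferentiableOn.analyticOnNhd _ isOpen_ball
    intro t ht
    exact (hcomp f hf t ht).differentiableAt.differentiableWithinAt
  have h0 : (0 : ℂ) ∈ ball (0 : ℂ) r := mem_ball_self hr
  have hord : ∀ n : ℕ, ∀ h ∈ B, (n : ℕ∞) ≤ analyticOrderAt (fun s => h (γ s) - h (γ 0)) 0 := by
    intro n
    induction n with
    | zero => intro h _; simp
    | succ n ih =>
      intro h hh
      have hh' := hB h hh
      rw [← (han h hh' 0 h0).analyticOrderAt_deriv_add_one]
      obtain ⟨h1, h2⟩ := hstep h hh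
      have h3 := ih _ h1
      simp only [hγ0, h2, sub_zero] at h3
      have h4 : (fun s => (jacM (Function.update g j h) (γ s)).det) =ᶠ[𝓝 0]
          (deriv (fun s => h (γ s)) * fun s => (jacM g (γ s)).det) := by
        filter_upwards [isOpen_ball.mem_nhds h0] with s hs
        exact (hrel h hh' s hs).symm
      have hJ := han _ (jac_diffOn hX hg) 0 h0
      rw [analyticOrderAt_congr h4, analyticOrderAt_mul (han h hh' 0 h0).deriv hJ,
        hJ.analyticOrderAt_eq_zero.2 (by rw [hγ0]; exact hdet), add_zero] at h3
      push_cast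
      gcongr
  have hconst : ∀ f ∈ F, ∀ t ∈ ball (0 : ℂ) r, f (γ t) = f (γ 0) := by
    intro f hf
    have htop : analyticOrderAt (fun s => f (γ s) - f (γ 0)) 0 = ⊤ :=
      ENat.eq_top_iff_forall_ge.2 fun n => hord n f (hFB hf)
    rw [analyticOrderAt_eq_top] at htop
    have hev : (fun s => f (γ s)) =ᶠ[𝓝 0] fun _ => f (γ 0) := by
      filter_upwards [htop] with s hs
      exact sub_eq_zero.1 hs
    exact (han f (hB f (hFB hf))).eqOn_of_preconnected_of_eventuallyEq analyticOnNhd_const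
      (convex_ball (0 : ℂ) r).isPreconnected h0 hev
  have ht : ((r / 2 : ℝ) : ℂ) ∈ ball (0 : ℂ) r := by
    rw [mem_ball_zero_iff, Complex.norm_real, Real.norm_eq_abs, abs_of_pos (by positivity)]
    linarith
  have hne : γ ((r / 2 : ℝ) : ℂ) ≠ γ 0 := by
    intro heq
    have h1 := hGγ _ ht
    rw [heq, hGγ 0 h0] at h1
    have h2 := congrFun h1 j
    simp [hℓ] at h2
    exact hr.ne' h2
  obtain ⟨f, hf, hfne⟩ := hFsep _ (hγX _ ht) _ (hγX _ h0) hne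
  exact hfne (hconst f hf _ ht)

lemma one_var {X : Set (Fin d → ℂ)} (hX : IsOpen X) {F : Set ((Fin d → ℂ) → ℂ)}
    (hFhol : ∀ f ∈ F, DifferentiableOn ℂ f X)
    (hFsep : ∀ x ∈ X, ∀ y ∈ X, x ≠ y → ∃ f ∈ F, f x ≠ f y)
    {V : Set ℂ} (hV : IsOpen V) (hVc : IsPreconnected V) (hVn : V.Nonempty)
    {Φ : ℂ → (Fin d → ℂ)} (hmaps : MapsTo Φ V X) (hcont : ContinuousOn Φ V)
    (h : ∀ f ∈ F, DifferentiableOn ℂ (fun z => f (Φ z)) V) (k : Fin d) :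
    DifferentiableOn ℂ (fun z => Φ z k) V := by
  classical
  set B : Set ((Fin d → ℂ) → ℂ) :=
    {h | DifferentiableOn ℂ h X ∧ DifferentiableOn ℂ (fun z => h (Φ z)) V} with hBdef
  set P : ℕ → Prop := fun n => ∃ g : Fin d → (Fin d → ℂ) → ℂ,
    (∀ i, DifferentiableOn ℂ (g i) X) ∧ (∃ y ∈ V, (jacM g (Φ y)).det ≠ 0) ∧
    (Finset.univ.filter fun i => g i ∈ B).card = n with hP
  have hPle : ∀ n, P n → n ≤ d := by
    rintro n ⟨g, -, -, rfl⟩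
    exact (Finset.card_le_univ _).trans (by simp)
  have hPex : ∃ n, P n := by
    obtain ⟨y, hy⟩ := hVn
    refine ⟨_, fun i x => x i, fun i => ?_, ⟨y, hy, ?_⟩, rfl⟩
    · fun_prop
    · have : jacM (fun (i : Fin d) (x : Fin d → ℂ) => x i) (Φ y) = 1 := by
        ext i l
        have h1 : HasFDerivAt (fun x : Fin d → ℂ => x i)
            (ContinuousLinearMap.proj (R := ℂ) (φ := fun _ : Fin d => ℂ) i) (Φ y) :=
          (ContinuousLinearMap.proj (R := ℂ) (φ := fun _ : Fin d => ℂ) i).hasFDerivAt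
        simp [jacM, h1.fderiv, Matrix.one_apply, Pi.single_apply]
      rw [this]
      simp
  obtain ⟨n0, hn0⟩ := hPex
  have hmax := Nat.findGreatest_spec (P := P) (hPle n0 hn0) hn0
  have hmax' : ∀ n, P n → n ≤ Nat.findGreatest P d := fun n hn =>
    Nat.le_findGreatest (hPle n hn) hn
  obtain ⟨g, hg, ⟨y0, hy0, hdet⟩, hcard⟩ := hmax
  have hall : ∀ i, g i ∈ B := by
    by_contra hcon
    push Not at hcon
    obtain ⟨j, hj⟩ := hcon
    have hzero : ∀ f ∈ B, ∀ y ∈ V, (jacM (Function.update g j f) (Φ y)).det = 0 := by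
      intro f hf y hy
      by_contra hne
      have hPn : P (Finset.univ.filter fun i => Function.update g j f i ∈ B).card := by
        refine ⟨Function.update g j f, fun i => ?_, ⟨y, hy, hne⟩, rfl⟩
        by_cases hij : i = j
        · subst hij
          simpa using hf.1
        · simpa [hij] using hg i
      have h1 := hmax' _ hPn
      rw [← hcard] at h1
      refine absurd h1 (not_le.2 (Finset.card_lt_card ?_))
      rw [Finset.ssubset_iff_of_subset]
      · exact ⟨j, by simpa using hf, by simpa using hj⟩
      · intro i hi
        have hi' : g i ∈ B := by simpa using hi
        have hij : i ≠ j := by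
          rintro rfl
          exact hj hi'
        simpa [hij] using hi'
    refine curve_contra hX hFsep (B := B) (fun f hf => ⟨hFhol f hf, h f hf⟩)
      (fun f hf => hf.1) hg (hmaps hy0) hdet j fun f hf => ⟨⟨?_, ?_⟩, hzero f hf y0 hy0⟩
    · apply jac_diffOn hX
      intro i
      by_cases hij : i = j
      · subst hij
        simpa using hf.1
      · simpa [hij] using hg i
    · exact (differentiableOn_const (c := (0 : ℂ))).congr fun y hy => hzero f hf y hy
  have hJ := jac_diffOn hX hg
  have hΦd : ∀ z ∈ V, (jacM g (Φ z)).det ≠ 0 → DifferentiableAt ℂ Φ z := by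
    intro z hz hne
    obtain ⟨ψ, W, hWo, hxW, hψ, -, -, hleft⟩ := inv_lemma hX hg (hmaps hz) hne
    have hΦc := hcont.continuousAt (hV.mem_nhds hz)
    have hev : Φ =ᶠ[𝓝 z] fun y => ψ (fun i => g i (Φ y)) := by
      filter_upwards [hΦc.eventually hleft] with y hy
      exact hy.symm
    refine DifferentiableAt.congr_of_eventuallyEq ?_ hev
    refine DifferentiableAt.comp z (g := ψ) (f := fun y => fun i => g i (Φ y))
      (hψ.differentiableAt (hWo.mem_nhds hxW)) ?_
    exact differentiableAt_pi.2 fun i => (hall i).2.differentiableAt (hV.mem_nhds hz)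
  refine rado_main hV hVc (u := fun z => (jacM g (Φ z)).det) ?_ ?_ ?_ ?_ ⟨y0, hy0, hdet⟩
  · exact hJ.continuousOn.comp hcont hmaps
  · exact (continuous_apply k).comp_continuousOn hcont
  · intro z hz hne
    exact (hJ.differentiableAt (hX.mem_nhds (hmaps hz))).comp z (hΦd z hz hne)
  · intro z hz hne
    exact differentiableAt_pi.1 (hΦd z hz hne) k

end Alg

end Helpers


/-- Let `X ⊆ ℂ^d` and `Y ⊆ ℂ^m` be nonempty open connected sets, and
let `F` be a collection of holomorphic functions on `X` that separates the points of `X`.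
If `Φ : Y → X` is continuous on `Y` and `f ∘ Φ` is holomorphic on `Y` for every `f ∈ F`,
then `Φ` is holomorphic on `Y` (as a map into `ℂ^d`). -/
theorem stmt19 {d m : ℕ} (X : Set (Fin d → ℂ)) (Y : Set (Fin m → ℂ))
    (hXo : IsOpen X) (hXc : IsConnected X) (hYo : IsOpen Y) (hYc : IsConnected Y)
    (F : Set ((Fin d → ℂ) → ℂ))
    (hFhol : ∀ f ∈ F, DifferentiableOn ℂ f X)
    (hFsep : ∀ x ∈ X, ∀ y ∈ X, x ≠ y → ∃ f ∈ F, f x ≠ f y)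
    (Φ : (Fin m → ℂ) → (Fin d → ℂ)) (hΦmaps : Set.MapsTo Φ Y X)
    (hΦcont : ContinuousOn Φ Y)
    (h : ∀ f ∈ F, DifferentiableOn ℂ (f ∘ Φ) Y) :
    DifferentiableOn ℂ Φ Y := by
  refine differentiableOn_pi.2 fun i => ?_
  have hc : ContinuousOn (fun y => Φ y i) Y := (continuous_apply i).comp_continuousOn hΦcont
  refine GH.differentiableOn hYo hc ?_
  intro z hz v
  have hℓd : Differentiable ℂ (fun t : ℂ => z + t • v) := by fun_prop
  have hopen : IsOpen ((fun t : ℂ => z + t • v) ⁻¹' Y) := hYo.preimage hℓd.continuous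
  obtain ⟨r, hr, hball⟩ := Metric.isOpen_iff.1 hopen 0 (by simpa using hz)
  have hmaps : Set.MapsTo (fun t : ℂ => z + t • v) (Metric.ball 0 r) Y := hball
  have key := one_var hXo hFhol hFsep (V := Metric.ball (0 : ℂ) r) Metric.isOpen_ball
    (convex_ball (0 : ℂ) r).isPreconnected ⟨0, Metric.mem_ball_self hr⟩
    (Φ := fun t => Φ (z + t • v)) (hΦmaps.comp hmaps)
    (hΦcont.comp hℓd.continuous.continuousOn hmaps)
    (fun f hf => (h f hf).comp hℓd.differentiableOn hmaps) i
  exact key.differentiableAt (Metric.isOpen_ball.mem_nhds (Metric.mem_ball_self hr))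
end
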